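/- For every complex number q with 0 < |q| < 1, one has ∑_{i,j,k,l ≥ 0} q^{4i²+4j²+4k²+5l²−4il−4jl+4kl−4l} / ((q⁸;q⁸)_i (q⁸;q⁸)_j (q⁸;q⁸)_k (q⁸;q⁸)_l) = J_8⁷ J_{12,40} J_{16,80} / (J_4⁴ J_16⁴ J_80) + 4q · J_16³ J_{32,80} / J_8⁴. (This is the paper's identity F(1, 1, 1, q^{−1}; q²) = J_2⁷ J_{3,10} J_{4,20}/(J_1⁴ J_4⁴ J_20) + 4q^{1/4} J_4³ J_{8,20}/J_2⁴, with q replaced by q⁴ throughout to clear fractional exponents.) -/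

import Mathlib

open scoped BigOperators

/-- The infinite q-Pochhammer symbol `(a; q)_∞ = ∏_{k=0}^∞ (1 - a q^k)`. -/
noncomputable def qPochInf (a q : ℂ) : ℂ := ∏' n : ℕ, (1 - a * q ^ n)

/-- The finite q-Pochhammer symbol `(a; q)_n = ∏_{k=0}^{n-1} (1 - a q^k)`. -/
noncomputable def qPoch (a q : ℂ) (n : ℕ) : ℂ :=
  Finset.prod (Finset.range n) (fun k => 1 - a * q ^ k)

/-- `J_m = (q^m; q^m)_∞`. -/
noncomputable def J (q : ℂ) (m : ℕ) : ℂ := qPochInf (q ^ m) (q ^ m)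

/-- `J_{a,m} = (q^a; q^m)_∞ (q^{m-a}; q^m)_∞ (q^m; q^m)_∞`. -/
noncomputable def Jam (q : ℂ) (a m : ℕ) : ℂ :=
  qPochInf (q ^ a) (q ^ m) * qPochInf (q ^ (m - a)) (q ^ m) * qPochInf (q ^ m) (q ^ m)

open Filter Topology

theorem aq_summable (a q : ℂ) (h1 : ‖q‖ < 1) : Summable (fun n : ℕ => ‖-(a * q ^ n)‖) := by
  simp only [norm_neg, norm_mul, norm_pow]
  exact (summable_geometric_of_lt_one (norm_nonneg _) h1).mul_left _

theorem poch_mult (a q : ℂ) (h1 : ‖q‖ < 1) : Multipliable (fun n : ℕ => 1 - a * q ^ n) := by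
  simpa [sub_eq_add_neg] using multipliable_one_add_of_summable (aq_summable a q h1)

theorem poch_tendsto (a q : ℂ) (h1 : ‖q‖ < 1) :
    Tendsto (fun n => qPoch a q n) atTop (𝓝 (qPochInf a q)) :=
  (poch_mult a q h1).hasProd.tendsto_prod_nat

theorem one_sub_ne (a q : ℂ) (h1 : ‖q‖ < 1) (ha : ‖a‖ < 1) (n : ℕ) : 1 - a * q ^ n ≠ 0 := by
  intro h
  have h2 : a * q ^ n = 1 := (sub_eq_zero.mp h).symm
  have h3 : ‖a * q ^ n‖ < 1 := by
    rw [norm_mul, norm_pow]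
    calc ‖a‖ * ‖q‖ ^ n ≤ ‖a‖ * 1 := by
          gcongr
          exact pow_le_one₀ (norm_nonneg _) h1.le
      _ < 1 := by simpa using ha
  rw [h2] at h3
  simp at h3

theorem qPoch_ne (a q : ℂ) (h1 : ‖q‖ < 1) (ha : ‖a‖ < 1) (n : ℕ) : qPoch a q n ≠ 0 :=
  Finset.prod_ne_zero_iff.mpr fun k _ => one_sub_ne a q h1 ha k

theorem qPochInf_ne (a q : ℂ) (h1 : ‖q‖ < 1) (ha : ‖a‖ < 1) : qPochInf a q ≠ 0 := by
  have := tprod_one_add_ne_zero_of_summable (f := fun n : ℕ => -(a * q ^ n))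
    (fun n => by simpa [sub_eq_add_neg] using one_sub_ne a q h1 ha n) (aq_summable a q h1)
  simpa [sub_eq_add_neg, qPochInf] using this

theorem qPoch_succ (a q : ℂ) (n : ℕ) : qPoch a q (n + 1) = qPoch a q n * (1 - a * q ^ n) := by
  simp [qPoch, Finset.prod_range_succ]

@[simp] theorem qPoch_zero (a q : ℂ) : qPoch a q 0 = 1 := by simp [qPoch]

theorem qPoch_add (a q : ℂ) (m n : ℕ) :
    qPoch a q (m + n) = qPoch a q m * qPoch (a * q ^ m) q n := by
  simp only [qPoch, Finset.prod_range_add]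
  congr 1
  refine Finset.prod_congr rfl fun k _ => ?_
  ring

theorem qPochInf_shift (a q : ℂ) (h1 : ‖q‖ < 1) (m : ℕ) :
    qPochInf a q = qPoch a q m * qPochInf (a * q ^ m) q := by
  have h := (poch_tendsto a q h1).comp (tendsto_add_atTop_nat m)
  have h2 := (poch_tendsto (a * q ^ m) q h1).const_mul (qPoch a q m)
  refine tendsto_nhds_unique h (h2.congr fun n => ?_)
  simp only [Function.comp]
  rw [add_comm n m, qPoch_add]

theorem bdd_of_tendsto {u : ℕ → ℂ} {x : ℂ} (h : Tendsto u atTop (𝓝 x)) :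
    ∃ C : ℝ, 0 ≤ C ∧ ∀ n, ‖u n‖ ≤ C := by
  obtain ⟨C, hC⟩ := (Metric.isBounded_range_of_tendsto u h).exists_norm_le
  exact ⟨C, (norm_nonneg _).trans (hC (u 0) ⟨0, rfl⟩), fun n => hC _ ⟨n, rfl⟩⟩

theorem inv_tendsto (c q : ℂ) (h1 : ‖q‖ < 1) (hc : ‖c‖ < 1) :
    Tendsto (fun n => (qPoch c q n)⁻¹) atTop (𝓝 (qPochInf c q)⁻¹) :=
  (poch_tendsto c q h1).inv₀ (qPochInf_ne c q h1 hc)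

/-- ratio test -/
theorem ratio_summable {f : ℕ → ℂ} {g : ℕ → ℂ} (hg : Tendsto g atTop (𝓝 0))
    (h : ∀ n, f (n + 1) = g n * f n) : Summable f := by
  refine summable_of_ratio_norm_eventually_le (r := 1/2) (by norm_num) ?_
  have h2 : ∀ᶠ n in atTop, ‖g n‖ < 1/2 := by
    have := hg.norm
    simp only [norm_zero] at this
    exact this.eventually (gt_mem_nhds (by norm_num))
  filter_upwards [h2] with n hn
  rw [h, norm_mul]
  gcongr

theorem pow_tendsto (q : ℂ) (h1 : ‖q‖ < 1) : Tendsto (fun n : ℕ => q ^ n) atTop (𝓝 0) :=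
  tendsto_pow_atTop_nhds_zero_of_norm_lt_one h1

noncomputable def XX (b c q : ℂ) (m : ℕ) : ℂ :=
  ∏ i ∈ Finset.range m, ((c * q ^ i - b) * q ^ i)

theorem XX_succ (b c q : ℂ) (m : ℕ) : XX b c q (m+1) = XX b c q m * ((c * q ^ m - b) * q ^ m) := by
  simp [XX, Finset.prod_range_succ]

theorem XX_summable (b c q : ℂ) (h1 : ‖q‖ < 1) : Summable (XX b c q) := by
  refine ratio_summable (g := fun m => (c * q ^ m - b) * q ^ m) ?_ fun n => ?_
  · have h := pow_tendsto q h1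
    simpa using ((h.const_mul c).sub_const b).mul h
  · rw [XX_succ, mul_comm]

noncomputable def STm (b c q : ℂ) (N m : ℕ) : ℂ :=
  q ^ (N * m) * XX b c q m * (qPoch q q m)⁻¹ * (qPoch c q (N + m))⁻¹

theorem ST_bound (b c q : ℂ) (h1 : ‖q‖ < 1) (hc : ‖c‖ < 1) :
    ∃ C : ℝ, 0 ≤ C ∧ ∀ N m, ‖STm b c q N m‖ ≤ ‖XX b c q m‖ * C := by
  obtain ⟨C1, h10, hC1⟩ := bdd_of_tendsto (inv_tendsto q q h1 h1)
  obtain ⟨C2, h20, hC2⟩ := bdd_of_tendsto (inv_tendsto c q h1 hc)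
  refine ⟨C1 * C2, by positivity, fun N m => ?_⟩
  have e : ‖q ^ (N * m)‖ ≤ 1 := by
    rw [norm_pow]; exact pow_le_one₀ (norm_nonneg _) h1.le
  calc ‖STm b c q N m‖ = ‖q ^ (N * m)‖ * ‖XX b c q m‖ * ‖(qPoch q q m)⁻¹‖ * ‖(qPoch c q (N + m))⁻¹‖ := by
        simp only [STm, norm_mul]
    _ ≤ 1 * ‖XX b c q m‖ * C1 * C2 := by
        gcongr
        · exact hC1 m
        · exact hC2 _
    _ = _ := by ring

theorem ST_summable (b c q : ℂ) (h1 : ‖q‖ < 1) (hc : ‖c‖ < 1) (N : ℕ) : Summable (STm b c q N) := by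
  obtain ⟨C, h0, hC⟩ := ST_bound b c q h1 hc
  exact Summable.of_norm_bounded ((XX_summable b c q h1).norm.mul_right C) (hC N)

theorem tele {G : ℕ → ℂ} (hG : Tendsto G atTop (𝓝 0)) (h0 : G 0 = 0)
    (hs : Summable (fun n => G (n+1) - G n)) : ∑' n, (G (n+1) - G n) = 0 := by
  have := hs.hasSum.tendsto_sum_nat
  simp only [Finset.sum_range_sub, h0, sub_zero] at this
  exact tendsto_nhds_unique this hG

theorem ST_step (b c q : ℂ) (h1 : ‖q‖ < 1) (hc : ‖c‖ < 1) (N : ℕ) :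
    ∑' m, STm b c q N m = (1 - b * q ^ N) * ∑' m, STm b c q (N+1) m := by
  have hs := ST_summable b c q h1 hc N
  have hs' := (ST_summable b c q h1 hc (N+1)).mul_left (1 - b * q ^ N)
  rw [← tsum_mul_left, ← sub_eq_zero, ← hs.tsum_sub hs']
  have key : ∀ m, STm b c q N m - (1 - b * q ^ N) * STm b c q (N+1) m
      = -STm b c q N (m+1) * (1 - q ^ (m+1)) - (-STm b c q N m * (1 - q ^ m)) := by
    intro m
    have e1 : qPoch q q (m+1) = qPoch q q m * (1 - q * q ^ m) := qPoch_succ _ _ _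
    have e2 : qPoch c q (N + 1 + m) = qPoch c q (N + m) * (1 - c * q ^ (N + m)) := by
      rw [show N + 1 + m = (N + m) + 1 by ring]; exact qPoch_succ _ _ _
    have e3 : qPoch c q (N + (m + 1)) = qPoch c q (N + m) * (1 - c * q ^ (N + m)) := by
      rw [← add_assoc]; exact qPoch_succ _ _ _
    have n1 := qPoch_ne q q h1 h1 m
    have n2 := qPoch_ne c q h1 hc (N+m)
    have n3 := one_sub_ne q q h1 h1 m
    have n4 := one_sub_ne c q h1 hc (N+m)
    simp only [STm, e1, e2, e3, XX_succ]
    rw [show (N+1)*m = N*m + m by ring, show N*(m+1) = N*m+N by ring]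
    rw [pow_add q N m] at n4 ⊢
    rw [pow_add q (N*m) m, pow_add q (N*m) N, pow_succ q m, mul_comm (q ^ m) q]
    generalize q ^ (N * m) = E at *
    generalize q ^ m = M at *
    generalize q ^ N = K at *
    have n5 : 1 - c * K * M ≠ 0 := by rwa [mul_assoc]
    have n6 : 1 - M * q ≠ 0 := by rwa [mul_comm]
    rw [show c * (K * M) = c * K * M by ring]
    clear n4
    generalize hD : 1 - c * K * M = D at *
    generalize hF : 1 - q * M = F at *
    field_simp
    rw [← hD]
    ring
  have hs2 := hs.sub hs'
  rw [show (fun m => STm b c q N m - (1 - b * q ^ N) * STm b c q (N+1) m) = _ from funext key] at hs2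
  rw [tsum_congr key]
  refine tele (G := fun m => -STm b c q N m * (1 - q ^ m)) ?_ (by simp) hs2
  simpa using hs.tendsto_atTop_zero.neg.mul ((pow_tendsto q h1).const_sub 1)

theorem ST_iter (b c q : ℂ) (h1 : ‖q‖ < 1) (hc : ‖c‖ < 1) (N : ℕ) :
    ∑' m, STm b c q 0 m = qPoch b q N * ∑' m, STm b c q N m := by
  induction N with
  | zero => simp
  | succ N ih => rw [ih, qPoch_succ, ST_step b c q h1 hc N]; ring

theorem ST_lim (b c q : ℂ) (h1 : ‖q‖ < 1) (hc : ‖c‖ < 1) :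
    Tendsto (fun N => ∑' m, STm b c q N m) atTop (𝓝 (qPochInf c q)⁻¹) := by
  obtain ⟨C, h0, hC⟩ := ST_bound b c q h1 hc
  have := tendsto_tsum_of_dominated_convergence (𝓕 := atTop) (f := fun N m => STm b c q N m)
    (g := fun m => if m = 0 then (qPochInf c q)⁻¹ else 0)
    ((XX_summable b c q h1).norm.mul_right C) ?_ (Eventually.of_forall hC)
  · simpa using this
  · intro m
    have h2 : Tendsto (fun N => (qPoch c q (N + m))⁻¹) atTop (𝓝 (qPochInf c q)⁻¹) :=
      (inv_tendsto c q h1 hc).comp (tendsto_add_atTop_nat m)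
    by_cases hm : m = 0
    · subst hm
      simpa [STm, XX] using h2
    · have h3 : Tendsto (fun N => q ^ (N * m)) atTop (𝓝 0) := by
        simp_rw [mul_comm _ m, pow_mul]
        exact pow_tendsto _ (by rw [norm_pow]; exact pow_lt_one₀ (norm_nonneg _) h1 hm)
      have := ((h3.mul_const (XX b c q m)).mul_const (qPoch q q m)⁻¹).mul h2
      simpa [STm, hm] using this

theorem ST_sum (b c q : ℂ) (h1 : ‖q‖ < 1) (hc : ‖c‖ < 1) :
    ∑' m, XX b c q m * (qPoch q q m)⁻¹ * (qPoch c q m)⁻¹ = qPochInf b q * (qPochInf c q)⁻¹ := by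
  have h := (poch_tendsto b q h1).mul (ST_lim b c q h1 hc)
  have h2 : ∑' m, STm b c q 0 m = ∑' m, XX b c q m * (qPoch q q m)⁻¹ * (qPoch c q m)⁻¹ := by
    simp [STm]
  rw [← h2]
  refine tendsto_nhds_unique ?_ h
  simp_rw [← ST_iter b c q h1 hc]
  exact tendsto_const_nhds

theorem XX_zero (b q : ℂ) (m : ℕ) : XX b 0 q m = (-b) ^ m * ∏ i ∈ Finset.range m, q ^ i := by
  simp only [XX, zero_mul, zero_sub, Finset.prod_mul_distrib, Finset.prod_const, Finset.card_range]

theorem euler_summable (b q : ℂ) (h1 : ‖q‖ < 1) : Summable (fun m => XX b 0 q m * (qPoch q q m)⁻¹) := by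
  have := ST_summable b 0 q h1 (by simp) 0
  refine this.congr fun m => ?_
  simp [STm, qPoch]

theorem euler (b q : ℂ) (h1 : ‖q‖ < 1) :
    ∑' m, XX b 0 q m * (qPoch q q m)⁻¹ = qPochInf b q := by
  have := ST_sum b 0 q h1 (by simp)
  simpa [qPoch, qPochInf] using this


noncomputable def rq (q : ℂ) (m : ℤ) : ℂ := if m < 0 then 0 else (qPoch q q m.toNat)⁻¹

theorem rq_nat (q : ℂ) (m : ℕ) : rq q (m : ℤ) = (qPoch q q m)⁻¹ := by simp [rq]

theorem rq_neg (q : ℂ) (m : ℤ) (h : m < 0) : rq q m = 0 := by simp [rq, h]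

theorem rq_step (q : ℂ) (h1 : ‖q‖ < 1) (m : ℤ) : rq q (m - 1) = (1 - q ^ m) * rq q m := by
  rcases lt_trichotomy m 0 with h | h | h
  · rw [rq_neg _ _ h, rq_neg _ _ (by omega)]; simp
  · subst h; rw [rq_neg _ _ (by omega)]; simp
  · obtain ⟨n, rfl⟩ : ∃ n : ℕ, m = (n : ℤ) + 1 := ⟨(m - 1).toNat, by omega⟩
    rw [show (n : ℤ) + 1 - 1 = (n : ℤ) by ring, rq_nat, show (n : ℤ) + 1 = ((n + 1 : ℕ) : ℤ) by push_cast; ring,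
      rq_nat, zpow_natCast, qPoch_succ]
    have := one_sub_ne q q h1 h1 n
    have := qPoch_ne q q h1 h1 n
    rw [pow_succ']
    field_simp

theorem rq_step' (q : ℂ) (h1 : ‖q‖ < 1) (m m' : ℤ) (h : m' = m - 1) : rq q m' = (1 - q ^ m) * rq q m := by
  rw [h, rq_step q h1]

theorem rq_bdd (q : ℂ) (h1 : ‖q‖ < 1) : ∃ C : ℝ, 0 ≤ C ∧ ∀ m, ‖rq q m‖ ≤ C := by
  obtain ⟨C, h0, hC⟩ := bdd_of_tendsto (inv_tendsto q q h1 h1)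
  refine ⟨C, h0, fun m => ?_⟩
  rw [rq]
  split_ifs
  · simpa using h0
  · exact hC _

theorem rq_tendsto (q : ℂ) (h1 : ‖q‖ < 1) (c : ℤ) :
    Tendsto (fun n : ℕ => rq q (n + c)) atTop (𝓝 (qPochInf q q)⁻¹) := by
  have h := inv_tendsto q q h1 h1
  have h2 : Tendsto (fun n : ℕ => ((n : ℤ) + c).toNat) atTop atTop := by
    refine tendsto_atTop.2 fun b => ?_
    filter_upwards [eventually_ge_atTop (b + (-c).toNat)] with n hn
    omega
  refine (h.comp h2).congr' ?_
  filter_upwards [eventually_ge_atTop ((-c).toNat)] with n hn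
  have : ¬ ((n : ℤ) + c < 0) := by omega
  simp [rq, this]

theorem int_ratio_summable {f : ℤ → ℂ} (u v : ℂ) (hu : u ≠ 0) (hv0 : v ≠ 0) (hv : ‖v‖ < 1)
    (h : ∀ k, f (k + 1) = u * v ^ k * f k) : Summable f := by
  refine Summable.of_nat_of_neg ?_ ?_
  · refine ratio_summable (g := fun n => u * v ^ n) ?_ fun n => ?_
    · simpa using (pow_tendsto v hv).const_mul u
    · have := h n
      push_cast at this ⊢
      rw [this, zpow_natCast]
  · refine ratio_summable (g := fun n => u⁻¹ * (v ^ n * v)) ?_ fun n => ?_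
    · simpa using ((pow_tendsto v hv).mul_const v).const_mul u⁻¹
    · have := h (-(n : ℤ) - 1)
      rw [show -(n : ℤ) - 1 + 1 = -n by ring] at this
      rw [this, show ((-(n : ℤ) - 1)) = -((n + 1 : ℕ) : ℤ) by push_cast; ring, zpow_neg, zpow_natCast]
      have : v ^ (n + 1) ≠ 0 := pow_ne_zero _ hv0
      rw [← pow_succ]
      field_simp

theorem bdd_mul_summable {c : ℤ → ℂ} (hc : Summable c) (q : ℂ) (h1 : ‖q‖ < 1) (s t : ℤ → ℤ) :
    Summable (fun k => c k * rq q (s k) * rq q (t k)) := by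
  obtain ⟨C, h0, hC⟩ := rq_bdd q h1
  refine Summable.of_norm_bounded (hc.norm.mul_right (C * C)) fun k => ?_
  rw [norm_mul, norm_mul, mul_assoc]
  gcongr
  · exact hC _
  · exact hC _

theorem tele_int {G : ℤ → ℂ} (hs : Summable G) : ∑' k, (G (k + 1) - G k) = 0 := by
  have h : Summable (fun k => G (k + 1)) := (Equiv.addRight (1 : ℤ)).summable_iff.mpr hs
  have h2 := (Equiv.addRight (1 : ℤ)).tsum_eq G
  simp only [Equiv.coe_addRight] at h2
  rw [Summable.tsum_sub h hs, h2, sub_self]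

/-! Jacobi triple product -/

/-- (-z)^r q^(r(r-1)/2) -/
noncomputable def th (z q : ℂ) (r : ℤ) : ℂ := (-z) ^ r * q ^ (r * (r - 1) / 2)

theorem tri_succ (r : ℤ) : (r + 1) * (r + 1 - 1) / 2 = r * (r - 1) / 2 + r := by
  rw [show (r + 1) * (r + 1 - 1) = r * (r - 1) + r * 2 by ring, Int.add_mul_ediv_right _ _ (by norm_num)]

theorem th_succ (z q : ℂ) (hz : z ≠ 0) (hq : q ≠ 0) (r : ℤ) : th z q (r + 1) = -z * q ^ r * th z q r := by
  rw [th, th, tri_succ, zpow_add₀ hq, zpow_add_one₀ (neg_ne_zero.mpr hz)]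
  ring

theorem th_summable (z q : ℂ) (hz : z ≠ 0) (hq : q ≠ 0) (h1 : ‖q‖ < 1) : Summable (th z q) :=
  int_ratio_summable (-z) q (neg_ne_zero.mpr hz) hq h1 (th_succ z q hz hq)

theorem jtp_step (z q : ℂ) (hz : z ≠ 0) (hq : q ≠ 0) (h1 : ‖q‖ < 1) (n : ℕ) :
    (1 - q ^ (2 * n + 2)) * (1 - q ^ (2 * n + 1)) *
      ∑' r : ℤ, th z q r * rq q ((n : ℤ) + 1 - r) * rq q ((n : ℤ) + 1 + r) =
    (1 - z * q ^ n) * (1 - q / z * q ^ n) *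
      ∑' r : ℤ, th z q r * rq q ((n : ℤ) - r) * rq q ((n : ℤ) + r) := by
  have hs := th_summable z q hz hq h1
  rw [← tsum_mul_left, ← tsum_mul_left, ← sub_eq_zero, ← Summable.tsum_sub
    ((bdd_mul_summable hs q h1 _ _).mul_left _) ((bdd_mul_summable hs q h1 _ _).mul_left _)]
  let N : ℂ := q ^ (n + 1)
  let G : ℤ → ℂ := fun r => (N ^ 2 / q - N / z) * (th z q r * rq q ((n : ℤ) + 1 - r) * rq q ((n : ℤ) + r))
    + (N ^ 2 / z - N) * ((th (z / q) q r) * rq q ((n : ℤ) + 1 - r) * rq q ((n : ℤ) + r))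
  have hG : Summable G := ((bdd_mul_summable hs q h1 _ _).mul_left _).add
    ((bdd_mul_summable (th_summable (z/q) q (div_ne_zero hz hq) hq h1) q h1 _ _).mul_left _)
  rw [← tele_int hG]
  refine tsum_congr fun r => ?_
  simp only [G]
  rw [th_succ z q hz hq, th_succ (z/q) q (div_ne_zero hz hq) hq]
  have e0 : th (z/q) q r = th z q r * (q ^ r)⁻¹ := by
    rw [th, th, ← neg_div, div_zpow]; ring
  rw [e0, rq_step' q h1 (n + 1 - r) (n - r) (by ring), rq_step' q h1 (n + 1 + r) (n + r) (by ring),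
    rq_step' q h1 (n + 1 - r) (n + 1 - (r + 1)) (by ring),
    show (n : ℤ) + (r + 1) = n + 1 + r by ring]
  have e1 : q ^ ((n : ℤ) + 1 - r) = N / q ^ r := by
    rw [zpow_sub₀ hq]; simp only [N]; norm_cast
  have e2 : q ^ ((n : ℤ) + 1 + r) = N * q ^ r := by
    rw [zpow_add₀ hq]; simp only [N]; norm_cast
  have e3 : q ^ (2 * n + 2) = N ^ 2 := by simp only [N]; ring
  have e4 : q ^ (2 * n + 1) = N ^ 2 / q := by simp only [N]; field_simp; ring
  have e5 : q ^ n = N / q := by simp only [N]; field_simp; ring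
  rw [e1, e2, e3, e4, e5]
  have hy : q ^ r ≠ 0 := zpow_ne_zero _ hq
  generalize q ^ r = y at *
  generalize N = N at *
  generalize rq q _ = A at *
  generalize rq q _ = B at *
  generalize th z q r = T at *
  field_simp
  ring

theorem jtp_fin (z q : ℂ) (hz : z ≠ 0) (hq : q ≠ 0) (h1 : ‖q‖ < 1) (n : ℕ) :
    qPoch q q (2 * n) * ∑' r : ℤ, th z q r * rq q ((n : ℤ) - r) * rq q ((n : ℤ) + r) =
    qPoch z q n * qPoch (q / z) q n := by
  induction n with
  | zero =>
    rw [tsum_eq_single 0]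
    · simp [th, rq]
    · intro r hr
      rcases lt_or_gt_of_ne hr with h | h
      · rw [rq_neg q (_ + r) (by simpa using h)]; simp
      · rw [rq_neg q (_ - r) (by simpa using h)]; simp
  | succ n ih =>
    have h := jtp_step z q hz hq h1 n
    rw [qPoch_succ z, qPoch_succ (q / z), show 2 * (n + 1) = 2 * n + 1 + 1 by ring, qPoch_succ q q (2*n+1),
      qPoch_succ q q (2*n), ← pow_succ', ← pow_succ']
    push_cast
    linear_combination qPoch q q (2 * n) * h + (1 - z * q ^ n) * (1 - q / z * q ^ n) * ih

theorem th_lim {c : ℤ → ℂ} (hc : Summable c) (q : ℂ) (h1 : ‖q‖ < 1) :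
    Tendsto (fun n : ℕ => ∑' r : ℤ, c r * rq q ((n : ℤ) - r) * rq q ((n : ℤ) + r)) atTop
      (𝓝 (∑' r, c r * (qPochInf q q)⁻¹ * (qPochInf q q)⁻¹)) := by
  obtain ⟨C, h0, hC⟩ := rq_bdd q h1
  refine tendsto_tsum_of_dominated_convergence (hc.norm.mul_right (C * C)) ?_ (Eventually.of_forall ?_)
  · intro r
    exact ((rq_tendsto q h1 (-r)).const_mul (c r)).mul (rq_tendsto q h1 r)
  · intro n k
    rw [norm_mul, norm_mul, mul_assoc]
    gcongr
    · exact hC _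
    · exact hC _

theorem jtp (z q : ℂ) (hz : z ≠ 0) (hq : q ≠ 0) (h1 : ‖q‖ < 1) :
    ∑' r : ℤ, th z q r = qPochInf z q * qPochInf (q / z) q * qPochInf q q := by
  have h2 : Tendsto (fun n : ℕ => 2 * n) atTop atTop :=
    tendsto_id.const_mul_atTop' (by norm_num)
  have a := ((poch_tendsto q q h1).comp h2).mul (th_lim (th_summable z q hz hq h1) q h1)
  have b := (poch_tendsto z q h1).mul (poch_tendsto (q / z) q h1)
  have := tendsto_nhds_unique (a.congr fun n => jtp_fin z q hz hq h1 n) b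
  rw [tsum_mul_right, tsum_mul_right] at this
  have hn := qPochInf_ne q q h1 h1
  rw [← this]
  field_simp


noncomputable def Tri (q : ℂ) (n : ℕ) : ℂ := ∏ i ∈ Finset.range n, q ^ i

theorem Tri_succ (q : ℂ) (n : ℕ) : Tri q (n+1) = Tri q n * q ^ n := by simp [Tri, Finset.prod_range_succ]
@[simp] theorem Tri_zero (q : ℂ) : Tri q 0 = 1 := by simp [Tri]

theorem tri_neg (r : ℤ) : (-r) * (-r - 1) / 2 = r * (r - 1) / 2 + r := by
  rw [show (-r) * (-r - 1) = r * (r - 1) + r * 2 by ring, Int.add_mul_ediv_right _ _ (by norm_num)]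

theorem th1_neg (q : ℂ) (hq : q ≠ 0) (s : ℤ) : th 1 q (-s) = th q q s := by
  rw [th, th, tri_neg, zpow_add₀ hq, zpow_neg, neg_eq_neg_one_mul q, mul_zpow]
  have : ((-1 : ℂ) ^ s)⁻¹ = (-1) ^ s := by
    rw [← inv_zpow]; norm_num
  rw [this]; ring

theorem thq (q : ℂ) (s : ℤ) : th q q s = th 1 q s * q ^ s := by
  rw [th, th, neg_eq_neg_one_mul q, mul_zpow]; ring

theorem thq_anti (q : ℂ) (hq : q ≠ 0) (s : ℤ) : th q q (-1 - s) = - th q q s := by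
  rw [show -1 - s = -(s + 1) by ring, ← th1_neg q hq (-(s+1)), neg_neg, th_succ 1 q one_ne_zero hq, thq]
  ring

noncomputable def AA (q : ℂ) (n : ℤ) : ℂ := ∑' s : ℤ, th 1 (q^2) s * rq q (n - 2 * s) * rq q (n + 2 * s)
noncomputable def BB (q : ℂ) (n : ℤ) : ℂ := ∑' s : ℤ, th 1 (q^2) s * rq q (n - 2 * s) * rq q (n + 1 + 2 * s)

theorem nsq {q : ℂ} (h1 : ‖q‖ < 1) : ‖q ^ 2‖ < 1 := by
  rw [norm_pow]; exact pow_lt_one₀ (norm_nonneg _) h1 (by norm_num)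

theorem AA_symm (q : ℂ) (hq : q ≠ 0) (n : ℤ) :
    AA q n = ∑' s : ℤ, th (q^2) (q^2) s * rq q (n - 2 * s) * rq q (n + 2 * s) := by
  rw [AA, ← (Equiv.neg ℤ).tsum_eq]
  refine tsum_congr fun s => ?_
  simp only [Equiv.neg_apply]
  rw [th1_neg _ (pow_ne_zero _ hq), show n - 2 * -s = n + 2 * s by ring, show n + 2 * -s = n - 2 * s by ring]
  ring

theorem AA_step (q : ℂ) (hq : q ≠ 0) (h1 : ‖q‖ < 1) (n : ℕ) :
    (1 - q ^ (2 * n + 1)) * (1 - q ^ (n + 1)) * AA q ((n : ℤ) + 1) = q ^ n * AA q n := by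
  have hq2 : q ^ 2 ≠ 0 := pow_ne_zero _ hq
  have hs := th_summable 1 (q^2) one_ne_zero hq2 (nsq h1)
  have hs' := th_summable (q^2) (q^2) hq2 hq2 (nsq h1)
  suffices h : (1 - q ^ (2 * n + 1)) * (1 - q ^ (n + 1)) * (AA q ((n : ℤ) + 1) + AA q ((n : ℤ) + 1))
      - q ^ n * (AA q n + AA q n) = 0 by
    linear_combination h / 2
  nth_rw 2 [AA_symm q hq]
  nth_rw 3 [AA_symm q hq]
  rw [AA, AA, ← Summable.tsum_add (bdd_mul_summable hs q h1 _ _) (bdd_mul_summable hs' q h1 _ _),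
    ← Summable.tsum_add (bdd_mul_summable hs q h1 _ _) (bdd_mul_summable hs' q h1 _ _),
    ← tsum_mul_left, ← tsum_mul_left, ← Summable.tsum_sub
    (((bdd_mul_summable hs q h1 _ _).add (bdd_mul_summable hs' q h1 _ _)).mul_left _)
    (((bdd_mul_summable hs q h1 _ _).add (bdd_mul_summable hs' q h1 _ _)).mul_left _)]
  let G : ℤ → ℂ := fun s => -1 * (th 1 (q^2) s * rq q ((n : ℤ) + 1 - 2 * s) * rq q ((n : ℤ) + 2 * s - 1))
  have hG : Summable G := (bdd_mul_summable hs q h1 _ _).mul_left _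
  rw [← tele_int hG]
  refine tsum_congr fun s => ?_
  simp only [G]
  let N : ℂ := q ^ (n + 1)
  have hy : q ^ s ≠ 0 := zpow_ne_zero _ hq
  have e0 : (q ^ 2) ^ s = (q ^ s) ^ 2 := by
    rw [← zpow_natCast, ← zpow_natCast, ← zpow_mul, ← zpow_mul, mul_comm]
  have e00 : q ^ (2 * s) = (q ^ s) ^ 2 := by
    rw [← zpow_natCast, ← zpow_mul, mul_comm]; rfl
  have eN : q ^ ((n : ℤ) + 1) = N := by simp only [N]; norm_cast
  have e1 : q ^ ((n : ℤ) + 1 - 2 * s) = N / (q ^ s) ^ 2 := by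
    rw [zpow_sub₀ hq, eN, e00]
  have e1' : q ^ ((n : ℤ) - 2 * s) = N / q / (q ^ s) ^ 2 := by
    rw [show (n : ℤ) - 2 * s = n + 1 - 2 * s - 1 by ring, zpow_sub_one₀ hq, e1]; field_simp
  have e2 : q ^ ((n : ℤ) + 1 + 2 * s) = N * (q ^ s) ^ 2 := by
    rw [zpow_add₀ hq, eN, e00]
  have e2' : q ^ ((n : ℤ) + 2 * s) = N / q * (q ^ s) ^ 2 := by
    rw [show (n : ℤ) + 2 * s = n + 1 + 2 * s - 1 by ring, zpow_sub_one₀ hq, e2]; field_simp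
  rw [th_succ 1 _ one_ne_zero hq2, thq (q^2), e0,
    show (n : ℤ) + 1 - 2 * (s + 1) = n - 2 * s - 1 by ring,
    show (n : ℤ) + 2 * (s + 1) - 1 = n + 1 + 2 * s by ring,
    rq_step q h1 (n - 2 * s), rq_step q h1 (n + 2 * s),
    rq_step' q h1 (n + 1 - 2 * s) (n - 2 * s) (by ring), rq_step' q h1 (n + 1 + 2 * s) (n + 2 * s) (by ring),
    e1, e2, e1', e2']
  have e3 : q ^ (2 * n + 1) = N ^ 2 / q := by simp only [N]; field_simp; ring
  have e5 : q ^ n = N / q := by simp only [N]; field_simp; ring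
  rw [show q ^ (n + 1) = N from rfl, e3, e5]
  generalize q ^ s = y at *
  generalize N = N at *
  generalize rq q _ = A at *
  generalize rq q _ = B at *
  generalize th 1 (q^2) s = T at *
  field_simp
  ring

theorem single_zero (q : ℂ) (c : ℤ → ℂ) (a : ℤ) (ha : 0 < a) :
    ∑' s : ℤ, c s * rq q (0 - a * s) * rq q (0 + a * s) = c 0 := by
  rw [tsum_eq_single 0]
  · simp [rq]
  · intro r hr
    rcases lt_or_gt_of_ne hr with h | h
    · rw [rq_neg q (_ + _) (by nlinarith)]; simp
    · rw [rq_neg q (_ - _) (by nlinarith)]; simp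

theorem AA_eq (q : ℂ) (hq : q ≠ 0) (h1 : ‖q‖ < 1) (n : ℕ) :
    qPoch q q (2 * n) * AA q n = Tri q n * qPoch (-q) q n := by
  induction n with
  | zero => simp [AA]; have := single_zero q (th 1 (q^2)) 2 (by norm_num); simp at this; rw [this]; simp [th]
  | succ n ih =>
    have h := AA_step q hq h1 n
    rw [Tri_succ, show 2 * (n + 1) = 2 * n + 1 + 1 by ring, qPoch_succ q q (2*n+1),
      qPoch_succ q q (2*n), qPoch_succ (-q), ← pow_succ', ← pow_succ', neg_mul, ← pow_succ']
    push_cast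
    linear_combination qPoch q q (2 * n) * (1 + q ^ (n+1)) * h + q ^ n * (1 + q ^ (n+1)) * ih

theorem BB_AA (q : ℂ) (hq : q ≠ 0) (h1 : ‖q‖ < 1) (n : ℕ) :
    (1 - q ^ (2 * n + 1)) * BB q n = AA q n := by
  have hq2 : q ^ 2 ≠ 0 := pow_ne_zero _ hq
  have hs := th_summable 1 (q^2) one_ne_zero hq2 (nsq h1)
  have hs' := th_summable (q^2) (q^2) hq2 hq2 (nsq h1)
  have hz : ∑' s : ℤ, th (q^2) (q^2) s * rq q ((n:ℤ) - 1 - 2 * s) * rq q ((n:ℤ) + 1 + 2 * s) = 0 := by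
    have : ∀ x : ℂ, x = -x → x = 0 := fun x hx => by linear_combination hx / 2
    apply this
    rw [← tsum_neg]
    rw [← (Equiv.subLeft (-1 : ℤ)).tsum_eq]
    refine tsum_congr fun s => ?_
    simp only [Equiv.subLeft_apply]
    rw [thq_anti _ hq2, show (n:ℤ) - 1 - 2 * (-1 - s) = n + 1 + 2 * s by ring,
      show (n:ℤ) + 1 + 2 * (-1 - s) = n - 1 - 2 * s by ring]
    ring
  rw [← add_zero (AA q n), ← mul_zero (q ^ (n + 1)), ← hz, AA, BB, ← tsum_mul_left, ← tsum_mul_left,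
    ← Summable.tsum_add (bdd_mul_summable hs q h1 _ _) ((bdd_mul_summable hs' q h1 _ _).mul_left _)]
  refine tsum_congr fun s => ?_
  have e0 : (q ^ 2) ^ s = (q ^ s) ^ 2 := by
    rw [← zpow_natCast, ← zpow_natCast, ← zpow_mul, ← zpow_mul, mul_comm]
  have e00 : q ^ (2 * s) = (q ^ s) ^ 2 := by
    rw [← zpow_natCast, ← zpow_mul, mul_comm]; rfl
  have hy : q ^ s ≠ 0 := zpow_ne_zero _ hq
  have e1 : q ^ ((n : ℤ) - 2 * s) = q ^ n / (q ^ s) ^ 2 := by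
    rw [zpow_sub₀ hq, e00, zpow_natCast]
  have e2 : q ^ ((n : ℤ) + 1 + 2 * s) = q * q ^ n * (q ^ s) ^ 2 := by
    rw [zpow_add₀ hq, e00, zpow_add_one₀ hq, zpow_natCast]; ring
  rw [thq (q^2), e0, rq_step' q h1 (n - 2 * s) (n - 1 - 2 * s) (by ring),
    rq_step' q h1 (n + 1 + 2 * s) (n + 2 * s) (by ring), e1, e2,
    show q ^ (2 * n + 1) = q * (q ^ n) ^ 2 by ring, pow_succ' q n]
  generalize q ^ s = y at *
  generalize q ^ n = N at *
  field_simp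
  ring

theorem BB_eq (q : ℂ) (hq : q ≠ 0) (h1 : ‖q‖ < 1) (n : ℕ) :
    qPoch q q (2 * n + 1) * BB q n = Tri q n * qPoch (-q) q n := by
  rw [qPoch_succ, ← pow_succ', mul_assoc, BB_AA q hq h1, AA_eq q hq h1]

noncomputable def c1 (q : ℂ) (k : ℤ) : ℂ := q ^ (3 * k ^ 2 - 2 * k)
noncomputable def c2 (q : ℂ) (k : ℤ) : ℂ := q ^ (3 * k ^ 2 + 4 * k + 1)

theorem c1_succ (q : ℂ) (hq : q ≠ 0) (k : ℤ) : c1 q (k+1) = q * (q ^ 6) ^ k * c1 q k := by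
  simp only [c1]
  rw [← zpow_natCast, ← zpow_mul, ← zpow_one_add₀ hq, ← zpow_add₀ hq]
  congr 1; push_cast; ring
theorem c2_succ (q : ℂ) (hq : q ≠ 0) (k : ℤ) : c2 q (k+1) = q ^ 7 * (q ^ 6) ^ k * c2 q k := by
  simp only [c2]
  rw [← zpow_natCast, ← zpow_natCast, ← zpow_mul, ← zpow_add₀ hq, ← zpow_add₀ hq]
  congr 1; push_cast; ring
theorem nsix {q : ℂ} (h1 : ‖q‖ < 1) : ‖q ^ 6‖ < 1 := by
  rw [norm_pow]; exact pow_lt_one₀ (norm_nonneg _) h1 (by norm_num)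
theorem c1_summable (q : ℂ) (hq : q ≠ 0) (h1 : ‖q‖ < 1) : Summable (c1 q) :=
  int_ratio_summable _ _ hq (pow_ne_zero _ hq) (nsix h1) (c1_succ q hq)
theorem c2_summable (q : ℂ) (hq : q ≠ 0) (h1 : ‖q‖ < 1) : Summable (c2 q) :=
  int_ratio_summable _ _ (pow_ne_zero _ hq) (pow_ne_zero _ hq) (nsix h1) (c2_succ q hq)
theorem c2_c1 (q : ℂ) (hq : q ≠ 0) (k : ℤ) : c2 q k = c1 q k * (q * (q ^ k) ^ 6) := by
  simp only [c1, c2]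
  rw [← zpow_natCast, ← zpow_mul, ← zpow_one_add₀ hq, ← zpow_add₀ hq]
  congr 1; push_cast; ring

noncomputable def CC (q : ℂ) (n : ℤ) : ℂ :=
  ∑' k : ℤ, (c1 q k - c2 q k) * rq q (n - 3 * k) * rq q (n + 1 + 3 * k)

theorem CC_split (q : ℂ) (hq : q ≠ 0) (h1 : ‖q‖ < 1) (n : ℤ) :
    CC q n = (∑' k : ℤ, c1 q k * rq q (n - 3 * k) * rq q (n + 3 * k))
      - ∑' k : ℤ, c2 q k * rq q (n - (3 * k + 1)) * rq q (n + (3 * k + 1)) := by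
  rw [CC, ← Summable.tsum_sub (bdd_mul_summable (c1_summable q hq h1) q h1 _ _)
    (bdd_mul_summable (c2_summable q hq h1) q h1 _ _)]
  refine tsum_congr fun k => ?_
  rw [c2_c1 q hq, rq_step' q h1 (n - 3 * k) (n - (3 * k + 1)) (by ring),
    rq_step' q h1 (n + 1 + 3 * k) (n + 3 * k) (by ring),
    show n + (3 * k + 1) = n + 1 + 3 * k by ring]
  have e00 : q ^ (3 * k) = (q ^ k) ^ 3 := by
    rw [← zpow_natCast, ← zpow_mul, mul_comm]; rfl
  have hy : q ^ k ≠ 0 := zpow_ne_zero _ hq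
  rw [zpow_sub₀ hq, zpow_add₀ hq, zpow_add_one₀ hq, e00]
  generalize q ^ k = y at *
  generalize q ^ n = N at *
  field_simp
  ring

theorem CC_step (q : ℂ) (hq : q ≠ 0) (h1 : ‖q‖ < 1) (n : ℕ) :
    (1 - q ^ (2 * n + 2)) * (1 - q ^ (2 * n + 1)) * CC q ((n : ℤ) + 1) = (q ^ n) ^ 2 * CC q n := by
  have hs := (c1_summable q hq h1).sub (c2_summable q hq h1)
  rw [CC, CC, ← tsum_mul_left, ← tsum_mul_left, ← sub_eq_zero, ← Summable.tsum_sub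
    ((bdd_mul_summable hs q h1 _ _).mul_left _) ((bdd_mul_summable hs q h1 _ _).mul_left _)]
  let G : ℤ → ℂ := fun k => -1 * (c1 q k * rq q ((n : ℤ) + 1 - 3 * k) * rq q ((n : ℤ) + 3 * k - 1))
  have hG : Summable G := (bdd_mul_summable (c1_summable q hq h1) q h1 _ _).mul_left _
  rw [← tele_int hG]
  refine tsum_congr fun k => ?_
  simp only [G]
  let N : ℂ := q ^ (n + 1)
  have hy : q ^ k ≠ 0 := zpow_ne_zero _ hq
  have e0 : (q ^ 6) ^ k = (q ^ k) ^ 6 := by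
    rw [← zpow_natCast, ← zpow_natCast, ← zpow_mul, ← zpow_mul, mul_comm]
  have e00 : q ^ (3 * k) = (q ^ k) ^ 3 := by
    rw [← zpow_natCast, ← zpow_mul, mul_comm]; rfl
  have eN : q ^ ((n : ℤ) + 1) = N := by simp only [N]; norm_cast
  have e1 : q ^ ((n : ℤ) + 1 - 3 * k) = N / (q ^ k) ^ 3 := by
    rw [zpow_sub₀ hq, eN, e00]
  have e1' : q ^ ((n : ℤ) - 3 * k) = N / q / (q ^ k) ^ 3 := by
    rw [show (n : ℤ) - 3 * k = n + 1 - 3 * k - 1 by ring, zpow_sub_one₀ hq, e1]; field_simp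
  have e1'' : q ^ ((n : ℤ) - 1 - 3 * k) = N / q ^ 2 / (q ^ k) ^ 3 := by
    rw [show (n : ℤ) - 1 - 3 * k = n - 3 * k - 1 by ring, zpow_sub_one₀ hq, e1']; field_simp
  have e2 : q ^ ((n : ℤ) + 1 + 3 * k) = N * (q ^ k) ^ 3 := by
    rw [zpow_add₀ hq, eN, e00]
  have e2' : q ^ ((n : ℤ) + 3 * k) = N / q * (q ^ k) ^ 3 := by
    rw [show (n : ℤ) + 3 * k = n + 1 + 3 * k - 1 by ring, zpow_sub_one₀ hq, e2]; field_simp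
  have e3' : q ^ ((n : ℤ) + 1 + 1 + 3 * k) = N * q * (q ^ k) ^ 3 := by
    rw [show (n : ℤ) + 1 + 1 + 3 * k = n + 1 + 3 * k + 1 by ring, zpow_add_one₀ hq, e2]; ring
  rw [c1_succ q hq, c2_c1 q hq, e0,
    show (n : ℤ) + 1 - 3 * (k + 1) = n - 1 - 3 * k - 1 by ring,
    show (n : ℤ) + 3 * (k + 1) - 1 = n + 1 + 1 + 3 * k by ring,
    rq_step q h1 (n - 1 - 3 * k), rq_step q h1 (n + 3 * k),
    rq_step' q h1 (n - 3 * k) (n - 1 - 3 * k) (by ring),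
    rq_step' q h1 (n + 1 - 3 * k) (n - 3 * k) (by ring),
    rq_step' q h1 (n + 1 + 3 * k) (n + 3 * k) (by ring),
    rq_step' q h1 (n + 1 + 1 + 3 * k) (n + 1 + 3 * k) (by ring),
    e1, e2, e1', e2', e1'', e3']
  have e3 : q ^ (2 * n + 1) = N ^ 2 / q := by simp only [N]; field_simp; ring
  have e4 : q ^ (2 * n + 2) = N ^ 2 := by simp only [N]; ring
  have e5 : q ^ n = N / q := by simp only [N]; field_simp; ring
  rw [e3, e4, e5]
  generalize q ^ k = y at *
  generalize N = N at *
  generalize rq q _ = A at *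
  generalize rq q _ = B at *
  generalize c1 q k = T at *
  field_simp
  ring

theorem CC_eq (q : ℂ) (hq : q ≠ 0) (h1 : ‖q‖ < 1) (n : ℕ) :
    qPoch q q (2 * n) * CC q n = Tri q n ^ 2 := by
  induction n with
  | zero =>
    have h2 := single_zero q (c1 q) 3 (by norm_num)
    have h3 : ∑' k : ℤ, c2 q k * rq q (0 - (3 * k + 1)) * rq q (0 + (3 * k + 1)) = 0 := by
      refine (tsum_congr fun k => ?_).trans tsum_zero
      rcases lt_or_ge (3 * k + 1) 0 with h | h
      · rw [rq_neg q (_ + _) (by omega)]; simp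
      · rw [rq_neg q (_ - _) (by omega)]; simp
    have h4 := CC_split q hq h1 0
    rw [h2, h3] at h4
    simp [h4, c1]
  | succ n ih =>
    have h := CC_step q hq h1 n
    rw [Tri_succ, show 2 * (n + 1) = 2 * n + 1 + 1 by ring, qPoch_succ q q (2*n+1),
      qPoch_succ q q (2*n), ← pow_succ', ← pow_succ']
    push_cast
    linear_combination qPoch q q (2 * n) * h + (q ^ n) ^ 2 * ih


theorem bailey {w : ℕ → ℂ} (hw : Summable w) {c : ℤ → ℂ} (hc : Summable c) (q : ℂ) (h1 : ‖q‖ < 1)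
    (s t : ℕ → ℤ → ℤ) :
    ∑' n : ℕ, w n * ∑' k : ℤ, c k * rq q (s n k) * rq q (t n k) =
    ∑' k : ℤ, c k * ∑' n : ℕ, w n * rq q (s n k) * rq q (t n k) := by
  obtain ⟨C, h0, hC⟩ := rq_bdd q h1
  have hS : Summable (fun p : ℕ × ℤ => w p.1 * c p.2 * rq q (s p.1 p.2) * rq q (t p.1 p.2)) := by
    have h2 : Summable (fun p : ℕ × ℤ => ‖w p.1 * c p.2‖) := (hw.norm.mul_norm hc.norm)
    refine Summable.of_norm_bounded (h2.mul_right (C * C)) fun p => ?_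
    rw [norm_mul, norm_mul, mul_assoc]
    gcongr
    · exact hC _
    · exact hC _
  have := hS.tsum_comm (f := fun n k => w n * c k * rq q (s n k) * rq q (t n k))
  calc _ = ∑' (n : ℕ) (k : ℤ), w n * c k * rq q (s n k) * rq q (t n k) := by
        refine tsum_congr fun n => ?_
        rw [← tsum_mul_left]
        refine tsum_congr fun k => by ring
    _ = _ := by
        rw [← this]
        refine tsum_congr fun n => ?_
        rw [← tsum_mul_left]
        refine tsum_congr fun k => by ring

theorem bdd_mul_summable_nat {c : ℕ → ℂ} (hc : Summable c) (q : ℂ) (h1 : ‖q‖ < 1) (s t : ℕ → ℤ) :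
    Summable (fun k => c k * rq q (s k) * rq q (t k)) := by
  obtain ⟨C, h0, hC⟩ := rq_bdd q h1
  refine Summable.of_norm_bounded (hc.norm.mul_right (C * C)) fun k => ?_
  rw [norm_mul, norm_mul, mul_assoc]
  gcongr
  · exact hC _
  · exact hC _

theorem shift_sum {w : ℕ → ℂ} (hw : Summable w) (q : ℂ) (h1 : ‖q‖ < 1) (t e : ℕ) :
    ∑' n : ℕ, w n * rq q ((n : ℤ) - t) * rq q ((n : ℤ) + e + t) =
    ∑' m : ℕ, w (m + t) * (qPoch q q m)⁻¹ * (qPoch q q (2 * t + e + m))⁻¹ := by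
  rw [← (bdd_mul_summable_nat hw q h1 _ _).sum_add_tsum_nat_add t, Finset.sum_eq_zero, zero_add]
  · refine tsum_congr fun m => ?_
    rw [show (((m + t : ℕ) : ℤ) - t) = (m : ℤ) by push_cast; ring,
      show (((m + t : ℕ) : ℤ) + e + t) = ((2 * t + e + m : ℕ) : ℤ) by push_cast; ring, rq_nat, rq_nat]
  · intro n hn
    rw [rq_neg q _ (by simpa using hn)]; simp

theorem wo_summable (q : ℂ) (h1 : ‖q‖ < 1) : Summable (fun n : ℕ => q ^ (n ^ 2 + n)) := by
  refine ratio_summable (g := fun n => q ^ 2 * (q ^ n * q ^ n)) ?_ fun n => by ring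
  simpa using ((pow_tendsto q h1).mul (pow_tendsto q h1)).const_mul (q ^ 2)

theorem we_summable (p : ℂ) (h1 : ‖p‖ < 1) : Summable (fun n : ℕ => p ^ (n ^ 2) * qPoch (-p) (p ^ 2) n) := by
  have h := pow_tendsto p h1
  refine ratio_summable (g := fun n => p * (p ^ n * p ^ n) * (1 + p * (p ^ n * p ^ n))) ?_ fun n => ?_
  · simpa using ((h.mul h).const_mul p).mul (((h.mul h).const_mul p).const_add 1)
  · rw [qPoch_succ]; ring

theorem npow {q : ℂ} (h1 : ‖q‖ < 1) (n : ℕ) (hn : n ≠ 0) : ‖q ^ n‖ < 1 := by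
  rw [norm_pow]; exact pow_lt_one₀ (norm_nonneg _) h1 hn

theorem Lo_nat (q : ℂ) (h1 : ‖q‖ < 1) (t : ℕ) :
    ∑' n : ℕ, q ^ (n ^ 2 + n) * rq q ((n : ℤ) - t) * rq q ((n : ℤ) + 1 + t) =
      q ^ (t ^ 2 + t) * (qPochInf q q)⁻¹ := by
  have h := shift_sum (wo_summable q h1) q h1 t 1
  push_cast at h
  rw [h, qPochInf_shift q q h1 (2 * t + 1), ← pow_succ']
  have h2 := ST_sum 0 (q ^ (2 * t + 1 + 1)) q h1 (npow h1 _ (by omega))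
  have h3 : qPochInf 0 q = 1 := by simp [qPochInf]
  rw [h3, one_mul] at h2
  rw [mul_inv, ← h2, ← tsum_mul_left, ← tsum_mul_left]
  refine tsum_congr fun m => ?_
  rw [qPoch_add q q (2 * t + 1) m, mul_inv, ← pow_succ' q (2 * t + 1)]
  have h4 : ∀ m, q ^ ((m + t) ^ 2 + (m + t)) = q ^ (t ^ 2 + t) * XX 0 (q ^ (2 * t + 1 + 1)) q m := by
    intro m
    induction m with
    | zero => simp [XX]
    | succ m ih =>
      rw [XX_succ, ← mul_assoc, ← ih]; ring
  rw [h4]; ring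

theorem Lo (q : ℂ) (h1 : ‖q‖ < 1) (t : ℤ) :
    ∑' n : ℕ, q ^ (n ^ 2 + n) * rq q ((n : ℤ) - t) * rq q ((n : ℤ) + 1 + t) =
      q ^ (t ^ 2 + t) * (qPochInf q q)⁻¹ := by
  rcases le_or_gt 0 t with h | h
  · obtain ⟨n, rfl⟩ := Int.eq_ofNat_of_zero_le h
    rw [Lo_nat q h1 n]; norm_cast
  · obtain ⟨n, hn⟩ := Int.eq_ofNat_of_zero_le (show 0 ≤ -1 - t by omega)
    obtain rfl : t = -1 - n := by omega
    rw [show (-1 - (n:ℤ)) ^ 2 + (-1 - (n:ℤ)) = ((n ^ 2 + n : ℕ) : ℤ) by push_cast; ring, zpow_natCast, ← Lo_nat q h1 n]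
    refine tsum_congr fun m => ?_
    rw [show (m:ℤ) - (-1 - n) = m + 1 + n by ring, show (m:ℤ) + 1 + (-1 - n) = m - n by ring]; ring

theorem Le_nat (p : ℂ) (h1 : ‖p‖ < 1) (t : ℕ) :
    ∑' n : ℕ, (p ^ (n ^ 2) * qPoch (-p) (p ^ 2) n) * rq (p^2) ((n : ℤ) - t) * rq (p^2) ((n : ℤ) + t) =
      p ^ (t ^ 2) * (qPochInf (-p) (p^2) * (qPochInf (p^2) (p^2))⁻¹) := by
  have h := shift_sum (we_summable p h1) (p^2) (nsq h1) t 0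
  push_cast at h
  simp only [add_zero] at h
  have h2 := ST_sum (-p * (p^2)^t) (p ^ 2 * (p^2) ^ (2 * t)) (p^2) (nsq h1) (by
    rw [← pow_succ']; exact npow (nsq h1) _ (by omega))
  rw [h, qPochInf_shift (p^2) (p^2) (nsq h1) (2 * t), qPochInf_shift (-p) (p^2) (nsq h1) t, mul_inv,
    show ∀ a b c d e : ℂ, a * (b * c * (d * e)) = a * b * d * (c * e) by intros; ring, ← h2, ← tsum_mul_left]
  refine tsum_congr fun m => ?_
  rw [qPoch_add (p^2) (p^2) (2 * t) m, mul_inv]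
  have h4 : ∀ m, p ^ ((m + t) ^ 2) * qPoch (-p) (p^2) (m + t) =
      p ^ (t ^ 2) * qPoch (-p) (p^2) t * XX (-p * (p^2)^t) (p ^ 2 * (p^2) ^ (2 * t)) (p^2) m := by
    intro m
    induction m with
    | zero => simp [XX]
    | succ m ih =>
      rw [XX_succ, ← mul_assoc, ← ih, show m + 1 + t = m + t + 1 by ring, qPoch_succ]; ring
  rw [h4]; ring

theorem Le (p : ℂ) (h1 : ‖p‖ < 1) (t : ℤ) :
    ∑' n : ℕ, (p ^ (n ^ 2) * qPoch (-p) (p ^ 2) n) * rq (p^2) ((n : ℤ) - t) * rq (p^2) ((n : ℤ) + t) =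
      p ^ (t ^ 2) * (qPochInf (-p) (p^2) * (qPochInf (p^2) (p^2))⁻¹) := by
  rcases le_or_gt 0 t with h | h
  · obtain ⟨n, rfl⟩ := Int.eq_ofNat_of_zero_le h
    rw [Le_nat p h1 n]; norm_cast
  · obtain ⟨n, hn⟩ := Int.eq_ofNat_of_zero_le (show 0 ≤ - t by omega)
    obtain rfl : t = - n := by omega
    rw [show (- (n:ℤ)) ^ 2 = ((n ^ 2 : ℕ) : ℤ) by push_cast; ring, zpow_natCast, ← Le_nat p h1 n]
    refine tsum_congr fun m => ?_
    rw [show (m:ℤ) - (- n) = m + n by ring, show (m:ℤ) + (- n) = m - n by ring]; ring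

/-- odd sum -/
theorem odd_sum (q : ℂ) (hq : q ≠ 0) (h1 : ‖q‖ < 1) :
    ∑' n : ℕ, q ^ (n ^ 2 + n) * (Tri q n * qPoch (-q) q n / qPoch q q (2 * n + 1)) =
    (qPochInf q q)⁻¹ * (qPochInf (q ^ 4) (q ^ 10) * qPochInf (q ^ 6) (q ^ 10) * qPochInf (q ^ 10) (q ^ 10)) := by
  have hq2 : q ^ 2 ≠ 0 := pow_ne_zero _ hq
  have hs := th_summable 1 (q^2) one_ne_zero hq2 (nsq h1)
  have hj := jtp (q ^ 6) (q ^ 10) (pow_ne_zero _ hq) (pow_ne_zero _ hq) (npow h1 _ (by norm_num))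
  rw [show q ^ 10 / q ^ 6 = q ^ 4 by field_simp, mul_comm (qPochInf (q^6) _)] at hj
  rw [← hj]
  have h := bailey (wo_summable q h1) hs q h1 (fun n s => n - 2 * s) (fun n s => n + 1 + 2 * s)
  have e : ∀ n : ℕ, Tri q n * qPoch (-q) q n / qPoch q q (2 * n + 1) =
    ∑' s : ℤ, th 1 (q^2) s * rq q (n - 2 * s) * rq q (n + 1 + 2 * s) := by
    intro n
    rw [← BB_eq q hq h1 n, BB]
    have := qPoch_ne q q h1 h1 (2 * n + 1)
    field_simp
  simp_rw [e]
  rw [h, ← tsum_mul_left]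
  refine tsum_congr fun s => ?_
  rw [Lo q h1 (2 * s), th, th]
  have e1 : ∀ (a : ℕ) (b : ℤ), (q ^ a) ^ b = q ^ (a * b) := fun a b => by rw [← zpow_natCast, ← zpow_mul]
  rw [neg_eq_neg_one_mul (q^6), mul_zpow, e1, e1, e1]
  obtain ⟨u, hu⟩ : ∃ u, s * (s - 1) = 2 * u := (Int.even_mul_pred_self s).two_dvd
  rw [hu, Int.mul_ediv_cancel_left _ (by norm_num)]
  have e3 : q ^ ((2:ℕ) * u) * q ^ ((2 * s) ^ 2 + 2 * s) = q ^ ((6:ℕ) * s) * q ^ ((10 : ℕ) * u) := by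
    rw [← zpow_add₀ hq, ← zpow_add₀ hq]
    congr 1
    push_cast
    linear_combination 4 * hu
  linear_combination (-1) ^ s * (qPochInf q q)⁻¹ * e3

/-- even sum -/
theorem even_sum (p : ℂ) (hp : p ≠ 0) (h1 : ‖p‖ < 1) :
    ∑' n : ℕ, p ^ (n ^ 2) * qPoch (-p) (p ^ 2) n * (Tri (p^2) n ^ 2 / qPoch (p^2) (p^2) (2 * n)) =
    (qPochInf (-p) (p^2) * (qPochInf (p^2) (p^2))⁻¹) *
      ((∑' k : ℤ, p ^ (15 * k ^ 2 - 4 * k)) - ∑' k : ℤ, p ^ (15 * k ^ 2 + 14 * k + 3)) := by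
  have hq2 : p ^ 2 ≠ 0 := pow_ne_zero _ hp
  have hw := we_summable p h1
  have s1 := c1_summable (p^2) hq2 (nsq h1)
  have s2 := c2_summable (p^2) hq2 (nsq h1)
  have b1 := bailey hw s1 (p^2) (nsq h1) (fun n s => n - 3 * s) (fun n s => n + 3 * s)
  have b2 := bailey hw s2 (p^2) (nsq h1) (fun n s => n - (3 * s + 1)) (fun n s => n + (3 * s + 1))
  have e : ∀ n : ℕ, Tri (p^2) n ^ 2 / qPoch (p^2) (p^2) (2 * n) = CC (p^2) n := by
    intro n
    rw [← CC_eq (p^2) hq2 (nsq h1) n]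
    have := qPoch_ne (p^2) (p^2) (nsq h1) (nsq h1) (2 * n)
    field_simp
  obtain ⟨C, h0, hC⟩ := rq_bdd (p^2) (nsq h1)
  have hsum : ∀ (c : ℤ → ℂ), Summable c → ∀ (s t : ℕ → ℤ → ℤ), Summable (fun n : ℕ =>
      (p ^ (n ^ 2) * qPoch (-p) (p ^ 2) n) * ∑' k : ℤ, c k * rq (p^2) (s n k) * rq (p^2) (t n k)) := by
    intro c hc s t
    refine Summable.of_norm_bounded (hw.norm.mul_right (∑' k, ‖c k‖ * (C * C))) fun n => ?_
    rw [norm_mul]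
    gcongr
    refine tsum_of_norm_bounded (hc.norm.mul_right (C * C)).hasSum fun k => ?_
    rw [norm_mul, norm_mul, mul_assoc]
    gcongr
    · exact hC _
    · exact hC _
  simp_rw [e, CC_split (p^2) hq2 (nsq h1), mul_sub]
  rw [Summable.tsum_sub (hsum _ s1 _ _) (hsum _ s2 _ _), b1, b2, ← tsum_mul_left, ← tsum_mul_left]
  have e1 : ∀ (b : ℤ), (p ^ 2) ^ b = p ^ (2 * b) := fun b => by
    rw [← zpow_natCast, ← zpow_mul]; rfl
  congr 1
  · refine tsum_congr fun k => ?_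
    rw [Le p h1, c1, e1, ← mul_assoc, ← zpow_add₀ hp, mul_comm]
    congr 2; ring
  · refine tsum_congr fun k => ?_
    rw [Le p h1, c2, e1, ← mul_assoc, ← zpow_add₀ hp, mul_comm]
    congr 2; ring


theorem th_pow (p : ℂ) (hp : p ≠ 0) (a b : ℕ) (n : ℤ) :
    th (p ^ a) (p ^ (2 * b)) n = (-1) ^ n * p ^ (b * n ^ 2 + (a - b) * n) := by
  have e1 : ∀ (a : ℕ) (b : ℤ), (p ^ a) ^ b = p ^ (a * b) := fun a b => by rw [← zpow_natCast, ← zpow_mul]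
  obtain ⟨u, hu⟩ : ∃ u, n * (n - 1) = 2 * u := (Int.even_mul_pred_self n).two_dvd
  rw [th, neg_eq_neg_one_mul (p^a), mul_zpow, hu, Int.mul_ediv_cancel_left _ (by norm_num), e1, e1, mul_assoc,
    ← zpow_add₀ hp]
  congr 2
  push_cast
  linear_combination (-b) * hu

theorem poch_even_odd (a q : ℂ) (h1 : ‖q‖ < 1) :
    qPochInf a q = qPochInf a (q^2) * qPochInf (a * q) (q^2) := by
  have h2 := nsq h1
  have := tprod_even_mul_odd (f := fun n => 1 - a * q ^ n)
    ((poch_mult a (q^2) h2).congr fun n => by rw [pow_mul]) ((poch_mult (a*q) (q^2) h2).congr fun n => by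
      ring)
  rw [qPochInf, ← this, qPochInf, qPochInf]
  congr 1
  · exact tprod_congr fun n => by rw [pow_mul]
  · exact tprod_congr fun n => by ring

theorem poch_neg (a q : ℂ) (h1 : ‖q‖ < 1) :
    qPochInf a q * qPochInf (-a) q = qPochInf (a^2) (q^2) := by
  rw [qPochInf, qPochInf, qPochInf, ← Multipliable.tprod_mul (poch_mult a q h1) (poch_mult (-a) q h1)]
  exact tprod_congr fun n => by ring

theorem poch_three (a q : ℂ) (h1 : ‖q‖ < 1) :
    qPochInf a q = qPochInf a (q^3) * qPochInf (a * q) (q^3) * qPochInf (a * q ^ 2) (q^3) := by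
  have h3 := npow h1 3 (by norm_num)
  have h := ((poch_tendsto a _ h3).mul (poch_tendsto (a * q) _ h3)).mul (poch_tendsto (a * q^2) _ h3)
  have h2 : Tendsto (fun n : ℕ => 3 * n) atTop atTop :=
    tendsto_id.const_mul_atTop' (by norm_num)
  refine tendsto_nhds_unique ((poch_tendsto a q h1).comp h2) (h.congr fun n => ?_)
  simp only [Function.comp]
  induction n with
  | zero => simp
  | succ n ih =>
    rw [show 3 * (n + 1) = 3 * n + 1 + 1 + 1 by ring, qPoch_succ a q, qPoch_succ a q, qPoch_succ a q, ← ih,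
      qPoch_succ, qPoch_succ, qPoch_succ]
    ring

theorem pent1 (p : ℂ) (hp : p ≠ 0) (h1 : ‖p‖ < 1) :
    ∑' m : ℤ, (-1) ^ m * p ^ (30 * m ^ 2 + 10 * m) = qPochInf (p^20) (p^20) := by
  have := jtp (p ^ 40) (p ^ (2 * 30)) (pow_ne_zero _ hp) (pow_ne_zero _ hp) (npow h1 _ (by norm_num))
  rw [show p ^ (2 * 30) / p ^ 40 = p ^ 20 by field_simp] at this
  rw [poch_three (p^20) (p^20) (npow h1 _ (by norm_num))]
  simp_rw [th_pow p hp] at this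
  ring_nf at this ⊢
  rw [this]

theorem pent2 (p : ℂ) (hp : p ≠ 0) (h1 : ‖p‖ < 1) :
    ∑' m : ℤ, (-1) ^ m * p ^ (30 * m ^ 2 - 10 * m) = qPochInf (p^20) (p^20) := by
  rw [← pent1 p hp h1, ← (Equiv.neg ℤ).tsum_eq]
  refine tsum_congr fun m => ?_
  simp only [Equiv.neg_apply]
  rw [zpow_neg, ← inv_zpow]
  norm_num

theorem pent0 (p : ℂ) :
    ∑' m : ℤ, (-1) ^ m * p ^ (30 * m ^ 2 - 30 * m) = 0 := by
  have : ∀ x : ℂ, x = -x → x = 0 := fun x hx => by linear_combination hx / 2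
  apply this
  rw [← tsum_neg, ← (Equiv.subLeft (1 : ℤ)).tsum_eq]
  refine tsum_congr fun m => ?_
  simp only [Equiv.subLeft_apply]
  have hm : (-1 : ℂ) ^ (1 - m) = - (-1) ^ m := by
    rw [zpow_sub₀ (by norm_num), zpow_one, div_eq_mul_inv, ← inv_zpow]; norm_num
  rw [hm]
  rw [show 30 * (1 - m) ^ 2 - 30 * (1 - m) = 30 * m ^ 2 - 30 * m by ring]
  ring

set_option maxHeartbeats 2000000 in
theorem quint (p : ℂ) (hp : p ≠ 0) (h1 : ‖p‖ < 1) :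
    (qPochInf (p^3) (p^10) * qPochInf (p^7) (p^10) * qPochInf (p^10) (p^10)) *
    (qPochInf (p^4) (p^20) * qPochInf (p^16) (p^20) * qPochInf (p^20) (p^20)) =
    qPochInf (p^20) (p^20) *
      ((∑' k : ℤ, p ^ (15 * k ^ 2 - 4 * k)) - ∑' k : ℤ, p ^ (15 * k ^ 2 + 14 * k + 3)) := by
  have j1 := jtp (p ^ 3) (p ^ (2 * 5)) (pow_ne_zero _ hp) (pow_ne_zero _ hp) (npow h1 _ (by norm_num))
  have j2 := jtp (p ^ 16) (p ^ (2 * 10)) (pow_ne_zero _ hp) (pow_ne_zero _ hp) (npow h1 _ (by norm_num))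
  have s1 := th_summable (p ^ 3) (p ^ (2 * 5)) (pow_ne_zero _ hp) (pow_ne_zero _ hp) (npow h1 _ (by norm_num))
  have s2 := th_summable (p ^ 16) (p ^ (2 * 10)) (pow_ne_zero _ hp) (pow_ne_zero _ hp) (npow h1 _ (by norm_num))
  rw [show p ^ (2 * 5) / p ^ 3 = p ^ 7 by field_simp] at j1
  rw [show p ^ (2 * 10) / p ^ 16 = p ^ 4 by field_simp, mul_comm (qPochInf (p^16) _)] at j2
  norm_num only at j1 j2
  rw [← j1, ← j2]
  have hS : Summable (fun x : ℤ × ℤ => th (p^3) (p^(2*5)) x.1 * th (p^16) (p^(2*10)) x.2) :=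
    summable_mul_of_summable_norm s1.norm s2.norm
  let e : ℤ × ℤ ≃ ℤ × ℤ :=
    { toFun := fun x => (x.1 - 2 * x.2, x.2)
      invFun := fun x => (x.1 + 2 * x.2, x.2)
      left_inv := fun x => by simp
      right_inv := fun x => by simp }
  have hS' : Summable (fun x : ℤ × ℤ => th (p^3) (p^(2*5)) (x.1 - 2 * x.2) * th (p^16) (p^(2*10)) x.2) :=
    e.summable_iff.mpr hS
  have t1 : (∑' r, th (p^3) (p^10) r) * ∑' r, th (p^16) (p^20) r =
      ∑' x : ℤ × ℤ, th (p^3) (p^(2*5)) x.1 * th (p^16) (p^(2*10)) x.2 :=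
    tsum_mul_tsum_of_summable_norm s1.norm s2.norm
  have t2 : ∑' x : ℤ × ℤ, th (p^3) (p^(2*5)) x.1 * th (p^16) (p^(2*10)) x.2 =
      ∑' x : ℤ × ℤ, th (p^3) (p^(2*5)) (x.1 - 2 * x.2) * th (p^16) (p^(2*10)) x.2 :=
    (e.tsum_eq _).symm
  rw [t1, t2, hS'.tsum_prod]
  have key : ∀ (k : ℤ) (i : ℕ), ∑' m : ℤ, (th (p^3) (p^(2*5)) (k * 3 + i - 2 * m) * th (p^16) (p^(2*10)) m) =
      (-1) ^ i * p ^ (15 * k ^ 2 + (10 * i + 4) * k + 5 * i ^ 2 - 2 * i) *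
        ∑' m : ℤ, (-1) ^ m * p ^ (30 * m ^ 2 + (10 - 20 * i) * m) := by
    intro k i
    rw [← (Equiv.addRight k).tsum_eq, ← tsum_mul_left]
    refine tsum_congr fun m => ?_
    simp only [Equiv.coe_addRight]
    rw [th_pow p hp, th_pow p hp]
    rw [show ∀ a b c d : ℂ, a * b * (c * d) = (a * c) * (b * d) by intros; ring, ← zpow_add₀ hp,
      ← zpow_add₀ (by norm_num),
      show ∀ a b c d : ℂ, a * b * (c * d) = (a * c) * (b * d) by intros; ring, ← zpow_add₀ hp]
    congr 1
    · rw [← zpow_natCast, ← zpow_add₀ (by norm_num),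
        show k * 3 + i - 2 * (m + k) + (m + k) = (i + m) + 2 * (k - m) by ring, zpow_add₀ (by norm_num),
        zpow_mul]
      norm_num
    · congr 1; push_cast; ring
  let h : ℤ → ℂ := fun N => ∑' m : ℤ, (th (p^3) (p^(2*5)) (N - 2 * m) * th (p^16) (p^(2*10)) m)
  have hh : Summable h := hS'.prod
  have hh' : Summable (fun x : ℤ × Fin 3 => h (x.1 * 3 + ((x.2 : ℕ) : ℤ))) :=
    (Int.divModEquiv 3).symm.summable_iff.mpr hh
  have t3 : ∑' N, h N = ∑' x : ℤ × Fin 3, h (x.1 * 3 + ((x.2 : ℕ) : ℤ)) :=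
    ((Int.divModEquiv 3).symm.tsum_eq _).symm
  change ∑' N, h N = _
  rw [t3, hh'.tsum_prod]
  have key2 : ∀ k : ℤ, ∑' c : Fin 3, h (k * 3 + ((c : ℕ) : ℤ))
      = qPochInf (p^20) (p^20) * p ^ (15 * k ^ 2 + 4 * k) - qPochInf (p^20) (p^20) * p ^ (15 * k ^ 2 + 14 * k + 3) := by
    intro k
    rw [tsum_fintype, Fin.sum_univ_three]
    have k0 := key k 0
    have k1 := key k 1
    have k2 := key k 2
    change h _ = _ at k0
    change h _ = _ at k1
    change h _ = _ at k2
    rw [show (fun m : ℤ => (-1:ℂ) ^ m * p ^ (30 * m ^ 2 + (10 - 20 * ((2 : ℕ) : ℤ)) * m)) = fun m : ℤ => (-1:ℂ) ^ m * p ^ (30 * m ^ 2 - 30 * m) by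
      funext m; congr 2; push_cast; ring, pent0 p] at k2
    rw [show (fun m : ℤ => (-1:ℂ) ^ m * p ^ (30 * m ^ 2 + (10 - 20 * ((1 : ℕ) : ℤ)) * m)) = fun m : ℤ => (-1:ℂ) ^ m * p ^ (30 * m ^ 2 - 10 * m) by
      funext m; congr 2; push_cast; ring, pent2 p hp h1] at k1
    rw [show (fun m : ℤ => (-1:ℂ) ^ m * p ^ (30 * m ^ 2 + (10 - 20 * ((0 : ℕ) : ℤ)) * m)) = fun m : ℤ => (-1:ℂ) ^ m * p ^ (30 * m ^ 2 + 10 * m) by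
      funext m; simp, pent1 p hp h1] at k0
    have f0 : h (k * 3 + (((0 : Fin 3) : ℕ) : ℤ)) = _ := k0
    have f1 : h (k * 3 + (((1 : Fin 3) : ℕ) : ℤ)) = _ := k1
    have f2 : h (k * 3 + (((2 : Fin 3) : ℕ) : ℤ)) = _ := k2
    rw [f0, f1, f2]
    rw [show 15 * k ^ 2 + (10 * ((0 : ℕ) : ℤ) + 4) * k + 5 * ((0 : ℕ) : ℤ) ^ 2 - 2 * ((0 : ℕ) : ℤ) = 15 * k ^ 2 + 4 * k by
      push_cast; ring, show 15 * k ^ 2 + (10 * ((1 : ℕ) : ℤ) + 4) * k + 5 * ((1 : ℕ) : ℤ) ^ 2 - 2 * ((1 : ℕ) : ℤ) = 15 * k ^ 2 + 14 * k + 3 by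
      push_cast; ring]
    ring
  have sA : Summable (fun k : ℤ => p ^ (15 * k ^ 2 + 4 * k)) := by
    refine int_ratio_summable (p^19) (p^30) (pow_ne_zero _ hp) (pow_ne_zero _ hp) (npow h1 _ (by norm_num)) fun k => ?_
    rw [← zpow_natCast, ← zpow_natCast, ← zpow_mul, ← zpow_add₀ hp, ← zpow_add₀ hp]
    congr 1; push_cast; ring
  have sB : Summable (fun k : ℤ => p ^ (15 * k ^ 2 + 14 * k + 3)) := by
    refine int_ratio_summable (p^29) (p^30) (pow_ne_zero _ hp) (pow_ne_zero _ hp) (npow h1 _ (by norm_num)) fun k => ?_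
    rw [← zpow_natCast, ← zpow_natCast, ← zpow_mul, ← zpow_add₀ hp, ← zpow_add₀ hp]
    congr 1; push_cast; ring
  rw [tsum_congr key2, (sA.mul_left _).tsum_sub (sB.mul_left _), tsum_mul_left, tsum_mul_left, mul_sub]
  congr 2
  rw [← (Equiv.neg ℤ).tsum_eq]
  refine tsum_congr fun k => ?_
  simp only [Equiv.neg_apply]
  congr 1; ring


theorem XX_zpow (q : ℂ) (hq : q ≠ 0) (c : ℤ) (m : ℕ) :
    XX (-(q ^ (4 + 4 * c))) 0 (q^8) m = q ^ (4 * (m : ℤ)^2 + 4 * c * m) := by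
  induction m with
  | zero => simp [XX]
  | succ m ih =>
    rw [XX_succ, ih, zero_mul, zero_sub, neg_neg, ← pow_mul, ← zpow_natCast, ← zpow_add₀ hq, ← zpow_add₀ hq]
    congr 1
    push_cast
    ring

theorem E_summable (q : ℂ) (hq : q ≠ 0) (h1 : ‖q‖ < 1) (c : ℤ) :
    Summable (fun m : ℕ => q ^ (4 * (m : ℤ)^2 + 4 * c * m) * (qPoch (q^8) (q^8) m)⁻¹) :=
  (euler_summable (-(q ^ (4 + 4 * c))) (q^8) (npow h1 8 (by norm_num))).congr fun m => by
    rw [XX_zpow q hq]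

theorem E_tsum (q : ℂ) (hq : q ≠ 0) (h1 : ‖q‖ < 1) (c : ℤ) :
    ∑' m : ℕ, q ^ (4 * (m : ℤ)^2 + 4 * c * m) * (qPoch (q^8) (q^8) m)⁻¹ =
      qPochInf (-(q ^ (4 + 4 * c))) (q^8) := by
  rw [← euler (-(q ^ (4 + 4 * c))) (q^8) (npow h1 8 (by norm_num))]
  exact tsum_congr fun m => by rw [XX_zpow q hq]

theorem D_shift (q : ℂ) (hq : q ≠ 0) (h1 : ‖q‖ < 1) (c : ℤ) :
    qPochInf (-(q ^ c)) (q^8) = (1 + q ^ c) * qPochInf (-(q ^ (c + 8))) (q^8) := by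
  rw [qPochInf_shift _ _ (npow h1 8 (by norm_num)) 1, qPoch_succ, qPoch_zero, zpow_add₀ hq]
  norm_cast
  simp

theorem Ee (q : ℂ) (hq : q ≠ 0) (h1 : ‖q‖ < 1) (m : ℕ) :
    qPochInf (-(q ^ (4 - 8 * (m : ℤ)))) (q^8) =
      qPochInf (-(q^4)) (q^8) * (q ^ (4 * m ^ 2))⁻¹ * qPoch (-(q^4)) (q^8) m := by
  induction m with
  | zero => simp
  | succ m ih =>
    rw [D_shift q hq h1, show (4 - 8 * ((m + 1 : ℕ) : ℤ)) + 8 = 4 - 8 * (m : ℤ) by push_cast; ring, ih, qPoch_succ]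
    have : q ^ (4 - 8 * ((m + 1 : ℕ) : ℤ)) = (q ^ (4 + 8 * m))⁻¹ := by
      rw [← zpow_natCast, ← zpow_neg]; congr 1; push_cast; ring
    rw [this, show 4 * (m + 1) ^ 2 = 4 * m ^ 2 + (4 + 8 * m) by ring, pow_add q (4 * m ^ 2), ← pow_mul, neg_mul, ← pow_add q 4]
    have h1 : q ^ (4 + 8 * m) ≠ 0 := pow_ne_zero _ hq
    have h2 : q ^ (4 * m ^ 2) ≠ 0 := pow_ne_zero _ hq
    generalize q ^ (4 + 8 * m) = x at *
    generalize q ^ (4 * m ^ 2) = y at *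
    field_simp
    ring

theorem Eo (q : ℂ) (hq : q ≠ 0) (h1 : ‖q‖ < 1) (m : ℕ) :
    qPochInf (-(q ^ (-8 * (m : ℤ)))) (q^8) =
      2 * qPochInf (-(q^8)) (q^8) * (q ^ (4 * m ^ 2 + 4 * m))⁻¹ * qPoch (-(q^8)) (q^8) m := by
  induction m with
  | zero =>
    rw [D_shift q hq h1]; norm_num
  | succ m ih =>
    rw [D_shift q hq h1, show (- 8 * ((m + 1 : ℕ) : ℤ)) + 8 = - 8 * (m : ℤ) by push_cast; ring, ih, qPoch_succ]
    have : q ^ (- 8 * ((m + 1 : ℕ) : ℤ)) = (q ^ (8 + 8 * m))⁻¹ := by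
      rw [← zpow_natCast, ← zpow_neg]; congr 1; push_cast; ring
    rw [this, show 4 * (m + 1) ^ 2 + 4 * (m + 1) = 4 * m ^ 2 + 4 * m + (8 + 8 * m) by ring, pow_add q (4 * m ^ 2 + 4 * m), ← pow_mul, neg_mul, ← pow_add q 8]
    have h1 : q ^ (8 + 8 * m) ≠ 0 := pow_ne_zero _ hq
    have h2 : q ^ (4 * m ^ 2 + 4 * m) ≠ 0 := pow_ne_zero _ hq
    generalize q ^ (8 + 8 * m) = x at *
    generalize q ^ (4 * m ^ 2 + 4 * m) = y at *
    field_simp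
    ring

theorem Tri_pow (q : ℂ) (m : ℕ) : Tri q m ^ 2 * q ^ m = q ^ (m ^ 2) := by
  induction m with
  | zero => simp
  | succ m ih =>
    rw [Tri_succ, show (m+1)^2 = m^2 + (2 * m + 1) by ring, pow_add q (m^2), ← ih]; ring

theorem neg_ne (a q : ℂ) (h1 : ‖q‖ < 1) (ha : ‖a‖ < 1) (n : ℕ) : qPoch (-a) q n ≠ 0 :=
  qPoch_ne _ _ h1 (by rwa [norm_neg]) n

/-- even term -/
theorem term_even (q : ℂ) (hq : q ≠ 0) (h1 : ‖q‖ < 1) (m : ℕ) :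
    q ^ (5 * ((2 * m : ℕ) : ℤ)^2 - 4 * ((2 * m : ℕ) : ℤ)) * (qPoch (q^8) (q^8) (2 * m))⁻¹ *
      (qPochInf (-(q ^ (4 + 4 * (-((2 * m : ℕ) : ℤ))))) (q^8) *
        (qPochInf (-(q ^ (4 + 4 * (-((2 * m : ℕ) : ℤ))))) (q^8) *
          qPochInf (-(q ^ (4 + 4 * ((2 * m : ℕ) : ℤ)))) (q^8))) =
    qPochInf (-(q^4)) (q^8) ^ 3 *
      ((q^4)^(m^2) * qPoch (-(q^4)) (q^8) m * (Tri (q^8) m ^ 2 / qPoch (q^8) (q^8) (2*m))) := by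
  have h8 := npow h1 8 (by norm_num)
  have h4 := npow h1 4 (by norm_num)
  have e1 := Ee q hq h1 m
  have e2 := qPochInf_shift (-(q^4)) (q^8) h8 m
  have n1 := neg_ne (q^4) (q^8) h8 h4 m
  have n2 := qPoch_ne (q^8) (q^8) h8 h8 (2 * m)
  have t := Tri_pow (q^8) m
  rw [show 4 + 4 * (-((2 * m : ℕ) : ℤ)) = 4 - 8 * (m : ℤ) by push_cast; ring, e1,
    show q ^ (4 + 4 * ((2 * m : ℕ) : ℤ)) = q ^ 4 * (q ^ 8) ^ m by
      rw [← pow_mul, ← pow_add, ← zpow_natCast]; congr 1; push_cast; ring]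
  rw [neg_mul] at e2
  have e3 : qPochInf (-(q ^ 4 * (q ^ 8) ^ m)) (q^8) = qPochInf (-(q^4)) (q^8) / qPoch (-(q^4)) (q^8) m := by
    rw [e2]; field_simp
  have e4 : q ^ (5 * ((2 * m : ℕ) : ℤ)^2 - 4 * ((2 * m : ℕ) : ℤ)) = (q ^ (4 * m ^ 2)) ^ 3 * Tri (q^8) m ^ 2 := by
    rw [← mul_left_inj' (pow_ne_zero m (pow_ne_zero 8 hq)), mul_assoc, t]
    rw [← pow_mul, ← pow_mul, ← pow_mul, ← pow_add, ← zpow_natCast, ← zpow_natCast, ← zpow_add₀ hq]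
    congr 1; push_cast; ring
  have n3 : q ^ (4 * m ^ 2) ≠ 0 := pow_ne_zero _ hq
  rw [e3, e4, ← pow_mul q 4 (m^2)]
  generalize q ^ (4 * m ^ 2) = x at *
  generalize qPoch (-(q^4)) (q^8) m = y at *
  generalize qPoch (q^8) (q^8) (2*m) = z at *
  field_simp

/-- odd term -/
theorem term_odd (q : ℂ) (hq : q ≠ 0) (h1 : ‖q‖ < 1) (m : ℕ) :
    q ^ (5 * ((2 * m + 1 : ℕ) : ℤ)^2 - 4 * ((2 * m + 1 : ℕ) : ℤ)) * (qPoch (q^8) (q^8) (2 * m + 1))⁻¹ *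
      (qPochInf (-(q ^ (4 + 4 * (-((2 * m + 1 : ℕ) : ℤ))))) (q^8) *
        (qPochInf (-(q ^ (4 + 4 * (-((2 * m + 1 : ℕ) : ℤ))))) (q^8) *
          qPochInf (-(q ^ (4 + 4 * ((2 * m + 1 : ℕ) : ℤ)))) (q^8))) =
    4 * q * qPochInf (-(q^8)) (q^8) ^ 3 *
      ((q^8)^(m^2+m) * (Tri (q^8) m * qPoch (-(q^8)) (q^8) m / qPoch (q^8) (q^8) (2*m+1))) := by
  have h8 := npow h1 8 (by norm_num)
  have e1 := Eo q hq h1 m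
  have e2 := qPochInf_shift (-(q^8)) (q^8) h8 m
  have n1 := neg_ne (q^8) (q^8) h8 h8 m
  have n2 := qPoch_ne (q^8) (q^8) h8 h8 (2 * m + 1)
  have t : Tri (q^8) m * q ^ (4 * m) = q ^ (4 * m ^ 2) := by
    clear * -
    induction m with
    | zero => simp
    | succ m ih =>
      rw [Tri_succ, show 4 * (m+1)^2 = 4 * m^2 + (8 * m + 4) by ring, pow_add q (4 * m^2), ← ih]; ring
  rw [show 4 + 4 * (-((2 * m + 1 : ℕ) : ℤ)) = - 8 * (m : ℤ) by push_cast; ring, e1,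
    show q ^ (4 + 4 * ((2 * m + 1 : ℕ) : ℤ)) = q ^ 8 * (q ^ 8) ^ m by
      rw [← pow_mul, ← pow_add, ← zpow_natCast]; congr 1; push_cast; ring]
  rw [neg_mul] at e2
  have e3 : qPochInf (-(q ^ 8 * (q ^ 8) ^ m)) (q^8) = qPochInf (-(q^8)) (q^8) / qPoch (-(q^8)) (q^8) m := by
    rw [e2]; field_simp
  have e4 : q ^ (5 * ((2 * m + 1 : ℕ) : ℤ)^2 - 4 * ((2 * m + 1 : ℕ) : ℤ)) =
      q * (q ^ (4 * m ^ 2 + 4 * m)) ^ 2 * ((q^8)^(m^2+m) * Tri (q^8) m) := by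
    rw [← mul_left_inj' (pow_ne_zero (4 * m) hq),
      show ∀ a b c d : ℂ, a * (b * c) * d = a * b * (c * d) by intros; ring, t]
    rw [← pow_mul, ← pow_mul, ← pow_succ', ← pow_add, ← pow_add, ← zpow_natCast, ← zpow_natCast, ← zpow_add₀ hq]
    congr 1; push_cast; ring
  have n3 : q ^ (4 * m ^ 2 + 4 * m) ≠ 0 := pow_ne_zero _ hq
  rw [e3, e4]
  generalize q ^ (4 * m ^ 2 + 4 * m) = x at *
  generalize (q ^ 8) ^ (m ^ 2 + m) = w at *
  generalize qPoch (-(q^8)) (q^8) m = y at *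
  generalize qPoch (q^8) (q^8) (2*m+1) = z at *
  field_simp
  ring

theorem expo_bound (i j k l : ℤ) (hk : 0 ≤ k) (hl : 0 ≤ l) :
    i + j + k + l - 20 ≤ 4*i^2 + 4*j^2 + 4*k^2 + 5*l^2 - 4*i*l - 4*j*l + 4*k*l - 4*l := by
  nlinarith [sq_nonneg (8*i - 4*l - 1), sq_nonneg (8*j - 4*l - 1), sq_nonneg (2*k - 1), sq_nonneg (l - 1), sq_nonneg (l-2), sq_nonneg (l-3), mul_nonneg hk hl]

theorem main_summable (q : ℂ) (hq : q ≠ 0) (h1 : ‖q‖ < 1) :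
    Summable (fun x : ℕ × ℕ × ℕ × ℕ =>
      (fun (i j k l : ℕ) =>
        q ^ ((4*(i:ℤ)^2 + 4*(j:ℤ)^2 + 4*(k:ℤ)^2 + 5*(l:ℤ)^2 - 4*(i:ℤ)*(l:ℤ) - 4*(j:ℤ)*(l:ℤ) + 4*(k:ℤ)*(l:ℤ) - 4*(l:ℤ)) : ℤ) /
          (qPoch (q ^ 8) (q ^ 8) i * qPoch (q ^ 8) (q ^ 8) j * qPoch (q ^ 8) (q ^ 8) k * qPoch (q ^ 8) (q ^ 8) l))
        x.1 x.2.1 x.2.2.1 x.2.2.2) := by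
  have h8 := npow h1 8 (by norm_num)
  obtain ⟨C, hC0, hC⟩ := bdd_of_tendsto (inv_tendsto (q^8) (q^8) h8 h8)
  have g := summable_geometric_of_lt_one (norm_nonneg q) h1
  have gn : ∀ i : ℕ, 0 ≤ ‖q‖ ^ i := fun i => by positivity
  have s2 := g.mul_of_nonneg g gn gn
  have s3 := g.mul_of_nonneg s2 gn (fun x => by positivity)
  have s4 := g.mul_of_nonneg s3 gn (fun x => by positivity)
  refine Summable.of_norm_bounded (s4.mul_left (C^4 * ‖q‖ ^ (-20 : ℤ))) ?_
  rintro ⟨i, j, k, l⟩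
  have hn : 0 < ‖q‖ := norm_pos_iff.mpr hq
  have b := expo_bound i j k l (by positivity) (by positivity)
  simp only [div_eq_mul_inv, mul_inv, norm_mul, norm_zpow]
  have b2 := zpow_le_zpow_right_of_le_one₀ hn h1.le b
  have b3 : ‖q‖ ^ ((i:ℤ) + j + k + l - 20) = ‖q‖ ^ (-20 : ℤ) * (‖q‖^i * (‖q‖^j * (‖q‖^k * ‖q‖^l))) := by
    rw [← pow_add, ← pow_add, ← pow_add, ← zpow_natCast, ← zpow_add₀ hn.ne']
    congr 1; push_cast; ring
  rw [b3] at b2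
  calc _ ≤ (‖q‖ ^ (-20 : ℤ) * (‖q‖^i * (‖q‖^j * (‖q‖^k * ‖q‖^l)))) * (C * C * C * C) := by
        gcongr <;> apply hC
    _ = _ := by ring

theorem l_sum (q : ℂ) (hq : q ≠ 0) (h1 : ‖q‖ < 1) :
    (∑' p : ℕ × ℕ × ℕ × ℕ,
      (fun (i j k l : ℕ) =>
        q ^ ((4*(i:ℤ)^2 + 4*(j:ℤ)^2 + 4*(k:ℤ)^2 + 5*(l:ℤ)^2 - 4*(i:ℤ)*(l:ℤ) - 4*(j:ℤ)*(l:ℤ) + 4*(k:ℤ)*(l:ℤ) - 4*(l:ℤ)) : ℤ) /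
          (qPoch (q ^ 8) (q ^ 8) i * qPoch (q ^ 8) (q ^ 8) j * qPoch (q ^ 8) (q ^ 8) k * qPoch (q ^ 8) (q ^ 8) l))
        p.1 p.2.1 p.2.2.1 p.2.2.2) =
    qPochInf (-(q^4)) (q^8) ^ 3 *
      (∑' m : ℕ, (q^4)^(m^2) * qPoch (-(q^4)) (q^8) m * (Tri (q^8) m ^ 2 / qPoch (q^8) (q^8) (2*m))) +
    4 * q * qPochInf (-(q^8)) (q^8) ^ 3 *
      ∑' m : ℕ, ((q^8)^(m^2+m) * (Tri (q^8) m * qPoch (-(q^8)) (q^8) m / qPoch (q^8) (q^8) (2*m+1))) := by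
  have hS := main_summable q hq h1
  let e : ℕ × ℕ × ℕ × ℕ ≃ ℕ × ℕ × ℕ × ℕ :=
    { toFun := fun x => (x.2.1, x.2.2.1, x.2.2.2, x.1)
      invFun := fun x => (x.2.2.2, x.1, x.2.1, x.2.2.1)
      left_inv := fun x => rfl
      right_inv := fun x => rfl }
  let E : ℤ → ℕ → ℂ := fun c m => q ^ (4 * (m : ℤ)^2 + 4 * c * m) * (qPoch (q^8) (q^8) m)⁻¹
  let G : ℕ × ℕ × ℕ × ℕ → ℂ := fun x =>
    q ^ (5 * (x.1 : ℤ)^2 - 4 * (x.1 : ℤ)) * (qPoch (q^8) (q^8) x.1)⁻¹ *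
      (E (-(x.1 : ℤ)) x.2.1 * (E (-(x.1 : ℤ)) x.2.2.1 * E (x.1 : ℤ) x.2.2.2))
  have hE : ∀ c, Summable (E c) := fun c => E_summable q hq h1 c
  have hG : ∀ x, (fun x : ℕ × ℕ × ℕ × ℕ =>
      (fun (i j k l : ℕ) =>
        q ^ ((4*(i:ℤ)^2 + 4*(j:ℤ)^2 + 4*(k:ℤ)^2 + 5*(l:ℤ)^2 - 4*(i:ℤ)*(l:ℤ) - 4*(j:ℤ)*(l:ℤ) + 4*(k:ℤ)*(l:ℤ) - 4*(l:ℤ)) : ℤ) /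
          (qPoch (q ^ 8) (q ^ 8) i * qPoch (q ^ 8) (q ^ 8) j * qPoch (q ^ 8) (q ^ 8) k * qPoch (q ^ 8) (q ^ 8) l))
        x.1 x.2.1 x.2.2.1 x.2.2.2) (e x) = G x := by
    rintro ⟨l, i, j, k⟩
    simp only [e, G, E, Equiv.coe_fn_mk, div_eq_mul_inv, mul_inv]
    rw [show ∀ a b c d A B C D : ℂ, a * A * (b * B * (c * C * (d * D))) = (a * (b * (c * d))) * (B * C * D * A) by
      intros; ring, ← zpow_add₀ hq, ← zpow_add₀ hq, ← zpow_add₀ hq]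
    congr 2; ring
  have sG : Summable G := (e.summable_iff.mpr hS).congr hG
  rw [← e.tsum_eq, tsum_congr hG, sG.tsum_prod]
  have inner : ∀ l : ℕ, ∑' x : ℕ × ℕ × ℕ, G (l, x) =
      q ^ (5 * (l : ℤ)^2 - 4 * (l : ℤ)) * (qPoch (q^8) (q^8) l)⁻¹ *
      (qPochInf (-(q ^ (4 + 4 * (-(l : ℤ))))) (q^8) *
        (qPochInf (-(q ^ (4 + 4 * (-(l : ℤ))))) (q^8) *
          qPochInf (-(q ^ (4 + 4 * (l : ℤ)))) (q^8))) := by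
    intro l
    rw [← E_tsum q hq h1, ← E_tsum q hq h1]
    have s23 : Summable fun x : ℕ × ℕ => ‖E (-(l : ℤ)) x.1 * E (l : ℤ) x.2‖ :=
      (hE (-(l : ℤ))).norm.mul_norm (hE (l : ℤ)).norm
    have u1 : (∑' m, E (-(l : ℤ)) m) * ∑' m, E (l : ℤ) m = ∑' x : ℕ × ℕ, E (-(l : ℤ)) x.1 * E (l : ℤ) x.2 :=
      tsum_mul_tsum_of_summable_norm (hE (-(l : ℤ))).norm (hE (l : ℤ)).norm
    have u2 : (∑' m, E (-(l : ℤ)) m) * (∑' x : ℕ × ℕ, E (-(l : ℤ)) x.1 * E (l : ℤ) x.2) =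
        ∑' x : ℕ × ℕ × ℕ, E (-(l : ℤ)) x.1 * (E (-(l : ℤ)) x.2.1 * E (l : ℤ) x.2.2) :=
      tsum_mul_tsum_of_summable_norm (hE (-(l : ℤ))).norm s23
    rw [← u1] at u2
    change _ = _ * ((∑' m, E (-(l : ℤ)) m) * ((∑' m, E (-(l : ℤ)) m) * ∑' m, E (l : ℤ) m))
    rw [u2, ← tsum_mul_left]
  have sL := sG.prod
  have s0 : Summable (fun m : ℕ => ∑' x : ℕ × ℕ × ℕ, G (2 * m, x)) :=
    sL.comp_injective (i := fun m : ℕ => 2 * m) fun a b h => by simpa using h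
  have s1 : Summable (fun m : ℕ => ∑' x : ℕ × ℕ × ℕ, G (2 * m + 1, x)) :=
    sL.comp_injective (i := fun m : ℕ => 2 * m + 1) fun a b h => by simpa using h
  rw [← tsum_even_add_odd (f := fun l => ∑' x : ℕ × ℕ × ℕ, G (l, x)) s0 s1, ← tsum_mul_left, ← tsum_mul_left]
  congr 1
  · exact tsum_congr fun m => by rw [inner, term_even q hq h1]
  · exact tsum_congr fun m => by rw [inner, term_odd q hq h1]

theorem A_eq (q : ℂ) (h1 : ‖q‖ < 1) :
    qPochInf (-(q^4)) (q^8) * (J q 4 * J q 16) = J q 8 ^ 2 := by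
  have h4 := npow h1 4 (by norm_num)
  have h8 := npow h1 8 (by norm_num)
  have a1 := poch_even_odd (q^4) (q^4) h4
  have a2 := poch_neg (q^4) (q^8) h8
  have a3 := poch_even_odd (q^8) (q^8) h8
  simp only [J]
  norm_num only [← pow_mul, ← pow_add] at a1 a2 a3
  rw [a1, a3, ← a2]
  ring

theorem B_eq (q : ℂ) (h1 : ‖q‖ < 1) :
    qPochInf (-(q^8)) (q^8) * J q 8 = J q 16 := by
  have h8 := npow h1 8 (by norm_num)
  have a2 := poch_neg (q^8) (q^8) h8
  simp only [J]
  norm_num only [← pow_mul, ← pow_add] at a2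
  rw [← a2]
  ring

theorem J_ne (q : ℂ) (h1 : ‖q‖ < 1) (n : ℕ) (hn : n ≠ 0) : J q n ≠ 0 :=
  qPochInf_ne _ _ (npow h1 n hn) (npow h1 n hn)

theorem stmt_18 (q : ℂ) (h0 : 0 < ‖q‖) (h1 : ‖q‖ < 1) :
    (∑' p : ℕ × ℕ × ℕ × ℕ,
      (fun (i j k l : ℕ) =>
        q ^ ((4*(i:ℤ)^2 + 4*(j:ℤ)^2 + 4*(k:ℤ)^2 + 5*(l:ℤ)^2 - 4*(i:ℤ)*(l:ℤ) - 4*(j:ℤ)*(l:ℤ) + 4*(k:ℤ)*(l:ℤ) - 4*(l:ℤ)) : ℤ) /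
          (qPoch (q ^ 8) (q ^ 8) i * qPoch (q ^ 8) (q ^ 8) j * qPoch (q ^ 8) (q ^ 8) k * qPoch (q ^ 8) (q ^ 8) l))
        p.1 p.2.1 p.2.2.1 p.2.2.2)
    = (J q 8)^7 * Jam q 12 40 * Jam q 16 80 / ((J q 4)^4 * (J q 16)^4 * J q 80)
      + 4 * q * (J q 16)^3 * Jam q 32 80 / (J q 8)^4 := by
  have hq : q ≠ 0 := norm_pos_iff.mp h0
  have n4 := J_ne q h1 4 (by norm_num)
  have n8 := J_ne q h1 8 (by norm_num)
  have n16 := J_ne q h1 16 (by norm_num)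
  have n80 := J_ne q h1 80 (by norm_num)
  have hA := A_eq q h1
  have hB := B_eq q h1
  have ev := even_sum (q^4) (pow_ne_zero _ hq) (npow h1 4 (by norm_num))
  have od := odd_sum (q^8) (pow_ne_zero _ hq) (npow h1 8 (by norm_num))
  have qu := quint (q^4) (pow_ne_zero _ hq) (npow h1 4 (by norm_num))
  rw [l_sum q hq h1, od]
  rw [show (q^4)^2 = q^8 by ring] at ev
  rw [ev]
  generalize ((∑' k : ℤ, (q^4) ^ (15 * k ^ 2 - 4 * k)) - ∑' k : ℤ, (q^4) ^ (15 * k ^ 2 + 14 * k + 3)) = T at *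
  simp only [← pow_mul] at qu ⊢
  norm_num only at qu ⊢
  have q2 : Jam q 12 40 * Jam q 16 80 = J q 80 * T := qu
  have j1 : qPochInf (q^32) (q^80) * qPochInf (q^48) (q^80) * qPochInf (q^80) (q^80) = Jam q 32 80 := rfl
  have j2 : qPochInf (q^8) (q^8) = J q 8 := rfl
  rw [j1, j2, mul_assoc (J q 8 ^ 7), q2]
  have hA' : qPochInf (-(q^4)) (q^8) = J q 8 ^ 2 / (J q 4 * J q 16) := by
    rw [← hA]; field_simp
  have hB' : qPochInf (-(q^8)) (q^8) = J q 16 / J q 8 := by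
    rw [← hB]; field_simp
  rw [hA', hB']
  field_simp
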